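/- arXiv:1311.5775 — 3 statements merged into one kernel-verified Lean document; each statement's English description precedes it below -/
import Mathlib

section
/- Let m ≥ 1 and let A₁, A₂ ∈ ℂ[t] be polynomials of degree 2m such that A₁ has exactly m roots (counted with multiplicity) in the open upper half-plane ℂ₊ = {z : Im z > 0} and exactly m roots in the open lower half-plane ℂ₋ = {z : Im z < 0}, and likewise for A₂ (in particular neither polynomial has a real root). Then for every vector h = (h₁,…,h_{2m}) ∈ ℂ^{2m} there exists exactly one pair (u₁, u₂) of smooth functions u₁ : [0,∞) → ℂ and u₂ : (−∞,0] → ℂ such that A₁(D_n)u₁ = 0 on (0,∞), A₂(D_n)u₂ = 0 on (−∞,0), the transmission conditions D_n^{j−1}u₁(0) − D_n^{j−1}u₂(0) = h_j hold for j = 1,…,2m, u₁(x_n) → 0 as x_n → +∞, and u₂(x_n) → 0 as x_n → −∞. -/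
noncomputable section
open scoped ENNReal
open Complex Filter Set

/-- `P(D_n) u` at `x`, where `D_n = -i d/dx` and `P` is a polynomial. -/
def polyOp (P : Polynomial ℂ) (u : ℝ → ℂ) (x : ℝ) : ℂ :=
  ∑ k ∈ Finset.range (P.natDegree + 1), P.coeff k * ((-Complex.I) ^ k * iteratedDeriv k u x)

/-- Solution predicate for the mixed transmission ODE problem: `u₁` solves `A₁(D_n)u₁ = 0`
on `(0,∞)`, `u₂` solves `A₂(D_n)u₂ = 0` on `(-∞,0)`, the canonical transmission conditions
`D_n^{j-1}u₁(0) - D_n^{j-1}u₂(0) = h_j` hold for `j = 1,…,2m`, and both functions decay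
at `+∞` resp. `-∞`. -/
def TransSol (m : ℕ) (A₁ A₂ : Polynomial ℂ) (h : Fin (2 * m) → ℂ) (u₁ u₂ : ℝ → ℂ) : Prop :=
  ContDiff ℝ (⊤ : ℕ∞) u₁ ∧ ContDiff ℝ (⊤ : ℕ∞) u₂ ∧
  (∀ x : ℝ, 0 < x → polyOp A₁ u₁ x = 0) ∧
  (∀ x : ℝ, x < 0 → polyOp A₂ u₂ x = 0) ∧
  (∀ j : Fin (2 * m),
    (-Complex.I) ^ (j : ℕ) * iteratedDeriv (j : ℕ) u₁ 0
      - (-Complex.I) ^ (j : ℕ) * iteratedDeriv (j : ℕ) u₂ 0 = h j) ∧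
  Tendsto u₁ atTop (nhds 0) ∧ Tendsto u₂ atBot (nhds 0)

namespace TR
open Polynomial

/-- Smooth functions. -/
def V : Submodule ℂ (ℝ → ℂ) where
  carrier := {u | ContDiff ℝ (⊤ : ℕ∞) u}
  add_mem' := by
    intro a b ha hb
    rw [mem_ofPred_eq] at *
    exact ContDiff.add ha hb
  zero_mem' := by
    rw [mem_ofPred_eq]
    exact contDiff_const
  smul_mem' := by
    intro c a ha
    rw [mem_ofPred_eq] at *
    exact ContDiff.smul contDiff_const ha

lemma V_cd (u : V) : ContDiff ℝ (⊤ : ℕ∞) (u : ℝ → ℂ) := u.2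

lemma V_diff (u : V) : Differentiable ℝ (u : ℝ → ℂ) :=
  ContDiff.differentiable (V_cd u) (by simp)

lemma V_deriv (u : V) : ContDiff ℝ (⊤ : ℕ∞) (deriv (u : ℝ → ℂ)) := by
  have h : ContDiff ℝ (⊤ : ℕ∞) (u : ℝ → ℂ) := u.2
  exact (contDiff_infty_iff_deriv.1 h).2

/-- The operator `κ d/dx`. -/
def E (κ : ℂ) : V →ₗ[ℂ] V where
  toFun u := ⟨fun x => κ * deriv (u : ℝ → ℂ) x, contDiff_const.mul (V_deriv u)⟩
  map_add' u v := by
    ext x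
    have : deriv ((u : ℝ → ℂ) + (v : ℝ → ℂ)) x = _ := deriv_add (V_diff u x) (V_diff v x)
    simp [this, mul_add]
  map_smul' c u := by
    ext x
    have : deriv (c • (u : ℝ → ℂ)) x = _ := deriv_const_smul c (V_diff u x)
    simp [this]
    ring

lemma E_apply (κ : ℂ) (u : V) (x : ℝ) : (E κ u : ℝ → ℂ) x = κ * deriv (u : ℝ → ℂ) x := rfl

lemma E_pow (κ : ℂ) (k : ℕ) (u : V) (x : ℝ) :
    (((E κ) ^ k) u : ℝ → ℂ) x = κ ^ k * iteratedDeriv k (u : ℝ → ℂ) x := by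
  induction k generalizing x with
  | zero => simp
  | succ k ih =>
    rw [pow_succ', Module.End.mul_apply, E_apply, iteratedDeriv_succ]
    have : ((((E κ) ^ k) u : V) : ℝ → ℂ) = fun x => κ ^ k * iteratedDeriv k (u : ℝ → ℂ) x :=
      funext ih
    rw [this, deriv_const_mul_field]
    ring

lemma polyOp_eq (P : ℂ[X]) (u : V) (x : ℝ) :
    polyOp P u x = (aeval (E (-I)) P u : ℝ → ℂ) x := by
  rw [aeval_eq_sum_range, polyOp]
  simp [LinearMap.sum_apply, E_pow, Finset.sum_apply]

/-- functions vanishing on `(0,∞)` -/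
def Z : Submodule ℂ V where
  carrier := {u | ∀ x : ℝ, 0 < x → (u : ℝ → ℂ) x = 0}
  add_mem' := fun ha hb x hx => by simp [ha x hx, hb x hx]
  zero_mem' := fun x _ => rfl
  smul_mem' := fun c u hu x hx => by simp [hu x hx]

lemma mem_Z {u : V} : u ∈ Z ↔ ∀ x : ℝ, 0 < x → (u : ℝ → ℂ) x = 0 := Iff.rfl

lemma E_Z (κ : ℂ) {u : V} (hu : u ∈ Z) : E κ u ∈ Z := by
  intro x hx
  rw [E_apply]
  have : (u : ℝ → ℂ) =ᶠ[nhds x] fun _ => 0 := by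
    filter_upwards [lt_mem_nhds hx] with y hy using hu y hy
  rw [this.deriv_eq]
  simp

lemma aeval_Z (κ : ℂ) (P : ℂ[X]) {u : V} (hu : u ∈ Z) : aeval (E κ) P u ∈ Z := by
  have hk : ∀ k : ℕ, ((E κ) ^ k) u ∈ Z := by
    intro k
    induction k with
    | zero => simpa
    | succ k ih => rw [pow_succ', Module.End.mul_apply]; exact E_Z κ ih
  rw [aeval_eq_sum_range, LinearMap.sum_apply]
  exact Z.sum_mem fun i _ => Z.smul_mem _ (hk i)

lemma Z_nonneg {u : V} (hu : u ∈ Z) (x : ℝ) (hx : 0 ≤ x) : (u : ℝ → ℂ) x = 0 := by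
  have hc : Continuous (u : ℝ → ℂ) := (V_diff u).continuous
  have : EqOn (u : ℝ → ℂ) (fun _ => 0) (closure (Ioi 0)) :=
    EqOn.closure (fun y hy => hu y hy) hc continuous_const
  rw [closure_Ioi] at this
  exact this hx

/-- decaying functions -/
def T : Submodule ℂ V where
  carrier := {u | Tendsto (u : ℝ → ℂ) atTop (nhds 0)}
  add_mem' := by
    intro a b ha hb
    rw [mem_ofPred_eq] at *
    have := Tendsto.add ha hb
    rw [add_zero] at this
    exact this
  zero_mem' := tendsto_const_nhds
  smul_mem' := by
    intro c u hu
    rw [mem_ofPred_eq] at *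
    have := Tendsto.const_smul hu c
    rw [smul_zero] at this
    exact this

lemma Z_le_T {u : V} (hu : u ∈ Z) : u ∈ T := by
  have : (u : ℝ → ℂ) =ᶠ[atTop] fun _ => 0 := by
    filter_upwards [eventually_gt_atTop 0] with y hy using hu y hy
  exact Tendsto.congr' this.symm tendsto_const_nhds

lemma aeval_XC (κ z : ℂ) (f : V) (x : ℝ) :
    (aeval (E κ) (X - C z) f : ℝ → ℂ) x = κ * deriv (f : ℝ → ℂ) x - z * (f : ℝ → ℂ) x := by
  simp [Module.algebraMap_end_apply, E_apply]

lemma hasDeriv_g {κ : ℂ} (hκ : κ ≠ 0) (z : ℂ) (f : V) (x : ℝ) :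
    HasDerivAt (fun x : ℝ => cexp (-(z / κ) * x) * (f : ℝ → ℂ) x)
      (cexp (-(z / κ) * x) * ((aeval (E κ) (X - C z) f : ℝ → ℂ) x / κ)) x := by
  have h1 : HasDerivAt (fun x : ℝ => cexp (-(z / κ) * x)) (cexp (-(z / κ) * x) * (-(z / κ))) x := by
    have := ((hasDerivAt_id (x : ℂ)).const_mul (-(z / κ))).cexp.comp_ofReal
    simpa using this
  refine (h1.mul (V_diff f x).hasDerivAt).congr_deriv ?_
  rw [aeval_XC]
  field_simp
  ring

lemma norm_e (a : ℂ) (x : ℝ) : ‖cexp (a * x)‖ = Real.exp (a.re * x) := by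
  rw [Complex.norm_exp]; simp

lemma S0 {κ : ℂ} (hκ : κ ≠ 0) (z : ℂ) (f : V) (hf : aeval (E κ) (X - C z) f ∈ Z)
    (x : ℝ) (hx : 0 ≤ x) : (f : ℝ → ℂ) x = cexp ((z / κ) * x) * (f : ℝ → ℂ) 0 := by
  have h := constant_of_has_deriv_right_zero (a := 0) (b := x)
    (f := fun x : ℝ => cexp (-(z / κ) * x) * (f : ℝ → ℂ) x)
    (fun y _ => (hasDeriv_g hκ z f y).continuousAt.continuousWithinAt)
    (fun y hy => by
      have := (hasDeriv_g hκ z f y).hasDerivWithinAt (s := Ici y)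
      rw [Z_nonneg hf y hy.1] at this
      simpa using this) x ⟨hx, le_rfl⟩
  simp only [ofReal_zero, mul_zero, Complex.exp_zero, one_mul] at h
  rw [← h, ← mul_assoc, ← Complex.exp_add]
  simp

lemma S3 {κ : ℂ} (hκ : κ ≠ 0) (z : ℂ) (f : V) (hf : aeval (E κ) (X - C z) f ∈ Z)
    (h0 : (f : ℝ → ℂ) 0 = 0) : f ∈ Z := by
  intro x hx
  rw [S0 hκ z f hf x hx.le, h0, mul_zero]

lemma S2 {κ : ℂ} (hκ : κ ≠ 0) (z : ℂ) (hz : 0 < (z / κ).re) (f : V)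
    (hf : aeval (E κ) (X - C z) f ∈ Z) (hT : f ∈ T) : f ∈ Z := by
  refine S3 hκ z f hf ?_
  have h1 : Tendsto (fun x => ‖(f : ℝ → ℂ) x‖) atTop (nhds 0) := by
    simpa using Tendsto.norm (show Tendsto (f : ℝ → ℂ) atTop (nhds 0) from hT)
  have h2 : ‖(f : ℝ → ℂ) 0‖ ≤ 0 := by
    refine ge_of_tendsto h1 ?_
    filter_upwards [eventually_ge_atTop 0] with x hx
    rw [S0 hκ z f hf x hx, norm_mul, norm_e]
    have : 1 ≤ Real.exp ((z / κ).re * x) := Real.one_le_exp (by positivity)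
    nlinarith [norm_nonneg ((f : ℝ → ℂ) 0)]
  simpa using h2

lemma S1 {κ : ℂ} (hκ : κ ≠ 0) (z : ℂ) (hz : (z / κ).re < 0) (f : V)
    (hf : aeval (E κ) (X - C z) f ∈ T) : f ∈ T := by
  set v := aeval (E κ) (X - C z) f with hv
  set a : ℝ := -(z / κ).re with ha
  have ha0 : 0 < a := by linarith
  have hvT : Tendsto (v : ℝ → ℂ) atTop (nhds 0) := hf
  have hk : 0 < ‖κ‖ := norm_pos_iff.2 hκ
  show Tendsto (f : ℝ → ℂ) atTop (nhds 0)
  rw [Metric.tendsto_atTop]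
  intro ε hε
  obtain ⟨X0, hX0⟩ := (Metric.tendsto_atTop.1 hvT) (ε / 2 * a * ‖κ‖) (by positivity)
  set g : ℝ → ℂ := fun x : ℝ => cexp (-(z / κ) * x) * (f : ℝ → ℂ) x with hg
  have key : ∀ x, X0 ≤ x → ‖g x‖ ≤ ‖g X0‖ + ε / 2 * (Real.exp (a * x) - Real.exp (a * X0)) := by
    intro x hx
    have hB : ∀ y : ℝ, HasDerivAt
        (fun y => ‖g X0‖ + ε / 2 * (Real.exp (a * y) - Real.exp (a * X0)))
        (ε / 2 * (Real.exp (a * y) * a)) y := by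
      intro y
      have := ((hasDerivAt_id y).const_mul a).exp
      simp only [id, mul_one] at this
      exact ((this.sub_const _).const_mul _).const_add _
    refine image_norm_le_of_norm_deriv_right_le_deriv_boundary (a := X0) (b := x) (f := g)
      (fun y _ => (hasDeriv_g hκ z f y).continuousAt.continuousWithinAt)
      (fun y _ => (hasDeriv_g hκ z f y).hasDerivWithinAt) (by simp) hB ?_ ⟨hx, le_rfl⟩
    intro y hy
    rw [norm_mul, norm_e, norm_div]
    have h1 : ‖(v : ℝ → ℂ) y‖ ≤ ε / 2 * a * ‖κ‖ := by
      have := hX0 y hy.1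
      rw [dist_zero_right] at this
      exact this.le
    have h2 : ‖(v : ℝ → ℂ) y‖ / ‖κ‖ ≤ ε / 2 * a := by
      rw [div_le_iff₀ hk]; exact h1
    have h3 : (-(z / κ)).re = a := by simp [ha]
    rw [h3]
    nlinarith [mul_le_mul_of_nonneg_left h2 (Real.exp_pos (a * y)).le]
  have hdec : Tendsto (fun x : ℝ => Real.exp (-(a * x)) * ‖g X0‖) atTop (nhds 0) := by
    have : Tendsto (fun x : ℝ => Real.exp (-(a * x))) atTop (nhds 0) :=
      Real.tendsto_exp_neg_atTop_nhds_zero.comp (tendsto_id.const_mul_atTop ha0)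
    simpa using this.mul_const ‖g X0‖
  obtain ⟨X1, hX1⟩ := (Metric.tendsto_atTop.1 hdec) (ε / 2) (by positivity)
  refine ⟨max X0 X1, fun x hx => ?_⟩
  rw [dist_zero_right]
  have k1 := key x (le_trans (le_max_left _ _) hx)
  have k2 := hX1 x (le_trans (le_max_right _ _) hx)
  rw [dist_zero_right, Real.norm_of_nonneg (by positivity)] at k2
  have k3 : ‖g x‖ = Real.exp (a * x) * ‖(f : ℝ → ℂ) x‖ := by
    rw [hg]; simp only [norm_mul]
    rw [norm_e]; simp [ha]
  have k4 : ‖(f : ℝ → ℂ) x‖ = Real.exp (-(a * x)) * ‖g x‖ := by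
    rw [k3, ← mul_assoc, ← Real.exp_add]; simp
  have k5 : Real.exp (-(a * x)) * Real.exp (a * x) = 1 := by
    rw [← Real.exp_add]; simp
  rw [k4]
  have p1 := Real.exp_pos (-(a * x))
  have p2 := Real.exp_pos (a * X0)
  have := mul_le_mul_of_nonneg_left k1 p1.le
  have p3 : 0 < Real.exp (-(a * x)) * (ε / 2 * Real.exp (a * X0)) := by positivity
  calc _ ≤ _ := this
    _ = Real.exp (-(a * x)) * ‖g X0‖ + ε / 2 * (Real.exp (-(a * x)) * Real.exp (a * x))
        - Real.exp (-(a * x)) * (ε / 2 * Real.exp (a * X0)) := by ring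
    _ < ε := by rw [k5]; linarith

lemma S4 {κ : ℂ} (hκ : κ ≠ 0) (z c : ℂ) (v : V) :
    ∃ f : V, aeval (E κ) (X - C z) f = v ∧ (f : ℝ → ℂ) 0 = c := by
  have he : ∀ b : ℂ, ContDiff ℝ (⊤ : ℕ∞) (fun x : ℝ => cexp (b * x)) := fun b =>
    (contDiff_const.mul Complex.ofRealCLM.contDiff).cexp
  set q : ℝ → ℂ := fun t => cexp (-(z / κ) * t) * ((v : ℝ → ℂ) t / κ) with hq
  have hqs : ContDiff ℝ (⊤ : ℕ∞) q := (he _).mul (ContDiff.div_const (V_cd v) κ)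
  set G : ℝ → ℂ := fun x => c + ∫ t in (0:ℝ)..x, q t with hG
  have hGd : ∀ x, HasDerivAt G (q x) x := fun x =>
    (hqs.continuous.integral_hasStrictDerivAt 0 x).hasDerivAt.const_add c
  have hGs : ContDiff ℝ (⊤ : ℕ∞) G := by
    rw [contDiff_infty_iff_deriv]
    refine ⟨fun x => (hGd x).differentiableAt, ?_⟩
    have : deriv G = q := funext fun x => (hGd x).deriv
    rw [this]; exact hqs
  refine ⟨⟨fun x => cexp ((z / κ) * x) * G x, (he _).mul hGs⟩, ?_, by simp [hG]⟩
  ext x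
  rw [aeval_XC]
  have h1 : HasDerivAt (fun x : ℝ => cexp ((z / κ) * x)) (cexp ((z / κ) * x) * (z / κ)) x := by
    have := ((hasDerivAt_id (x : ℂ)).const_mul (z / κ)).cexp.comp_ofReal
    simpa using this
  have h2 : deriv (fun x : ℝ => cexp ((z / κ) * x) * G x) x = _ := (h1.mul (hGd x)).deriv
  have h3 : cexp ((z / κ) * x) * cexp (-(z / κ) * x) = 1 := by
    rw [← Complex.exp_add]; simp
  simp only [h2, hq]
  have : κ * (cexp (z / κ * x) * (z / κ) * G x + cexp (z / κ * x) *
      (cexp (-(z / κ) * x) * ((v : ℝ → ℂ) x / κ))) - z * (cexp (z / κ * x) * G x)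
      = (cexp ((z / κ) * x) * cexp (-(z / κ) * x)) * (v : ℝ → ℂ) x := by
    field_simp
    ring
  rw [this, h3, one_mul]

/-- Monic polynomial with prescribed roots. -/
def Ps (s : Multiset ℂ) : ℂ[X] := (s.map fun z => X - C z).prod

lemma Ps_cons (z : ℂ) (s : Multiset ℂ) : Ps (z ::ₘ s) = (X - C z) * Ps s := by simp [Ps]

lemma Ps_zero : Ps 0 = 1 := by simp [Ps]

lemma av_mul (κ : ℂ) (P Q : ℂ[X]) (f : V) :
    aeval (E κ) (P * Q) f = aeval (E κ) P (aeval (E κ) Q f) := by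
  rw [map_mul, Module.End.mul_apply]

lemma Ps_cons_av (κ z : ℂ) (s : Multiset ℂ) (f : V) :
    aeval (E κ) (Ps (z ::ₘ s)) f = aeval (E κ) (Ps s) (aeval (E κ) (X - C z) f) := by
  rw [Ps_cons, mul_comm, av_mul]

lemma L1 {κ : ℂ} (hκ : κ ≠ 0) (s : Multiset ℂ) (hs : ∀ z ∈ s, (z / κ).re < 0) (f : V)
    (hf : aeval (E κ) (Ps s) f ∈ Z) : f ∈ T := by
  induction s using Multiset.induction_on generalizing f with
  | empty => rw [Ps_zero] at hf; exact Z_le_T (by simpa using hf)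
  | cons z s ih =>
    rw [Ps_cons_av] at hf
    exact S1 hκ z (hs z (by simp)) f (ih (fun w hw => hs w (by simp [hw])) _ hf)

lemma L2 {κ : ℂ} (hκ : κ ≠ 0) (s : Multiset ℂ) (hs : ∀ z ∈ s, 0 < (z / κ).re) (f : V)
    (hf : aeval (E κ) (Ps s) f ∈ Z)
    (hT : ∀ p : ℂ[X], p.natDegree ≤ s.card → aeval (E κ) p f ∈ T) : f ∈ Z := by
  induction s using Multiset.induction_on generalizing f with
  | empty => rw [Ps_zero] at hf; simpa using hf
  | cons z s ih =>
    rw [Ps_cons_av] at hf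
    refine S2 hκ z (hs z (by simp)) f (ih (fun w hw => hs w (by simp [hw])) _ hf ?_) ?_
    · intro p hp
      rw [← av_mul]
      refine hT _ (natDegree_mul_le.trans ?_)
      rw [natDegree_X_sub_C]; simpa using hp
    · simpa using hT 1 (by simp)

lemma L2' {κ : ℂ} (hκ : κ ≠ 0) (μ : ℂ) (hμ : (μ / κ).re < 0) (N : ℕ) (y : V)
    (hy : aeval (E κ) ((X - C μ) ^ N) y ∈ T) (p : ℂ[X]) (hp : p.natDegree ≤ N) :
    aeval (E κ) p y ∈ T := by
  induction N generalizing y p with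
  | zero =>
    rw [eq_C_of_natDegree_le_zero hp, aeval_C, Module.algebraMap_end_apply]
    exact T.smul_mem _ (by simpa using hy)
  | succ N ih =>
    rw [pow_succ, av_mul] at hy
    have h1 := ih _ hy
    have h2 : y ∈ T := S1 hκ μ hμ y (by simpa using h1 1 (by simp))
    have h3 := modByMonic_add_div p (X - C μ)
    rw [modByMonic_X_sub_C_eq_C_eval] at h3
    rw [← h3, map_add, LinearMap.add_apply, mul_comm, av_mul, aeval_C,
      Module.algebraMap_end_apply]
    refine T.add_mem (T.smul_mem _ h2) (h1 _ ?_)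
    rw [natDegree_divByMonic _ (monic_X_sub_C μ), natDegree_X_sub_C]
    omega

lemma Ps_coprime (s t : Multiset ℂ) (h : ∀ z ∈ s, ∀ w ∈ t, z ≠ w) :
    IsCoprime (Ps s) (Ps t) := by
  induction s using Multiset.induction_on with
  | empty => rw [Ps_zero]; exact isCoprime_one_left
  | cons z s ih =>
    rw [Ps_cons]
    refine IsCoprime.mul_left ?_ (ih fun a ha => h a (by simp [ha]))
    have h' := h z (by simp)
    clear ih h
    induction t using Multiset.induction_on with
    | empty => rw [Ps_zero]; exact isCoprime_one_right
    | cons w t ih =>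
      rw [Ps_cons]
      exact IsCoprime.mul_right
        (isCoprime_X_sub_C_of_isUnit_sub (sub_ne_zero.2 (h' w (by simp))).isUnit)
        (ih fun a ha => h' a (by simp [ha]))

lemma Ps_natDegree (s : Multiset ℂ) : (Ps s).natDegree = s.card := by
  simp [Ps, natDegree_multiset_prod_X_sub_C_eq_card]

lemma Ps_monic (s : Multiset ℂ) : (Ps s).Monic := monic_multisetProd_X_sub_C s

lemma L3 {κ : ℂ} (hκ : κ ≠ 0) (s : Multiset ℂ) (hs : ∀ z ∈ s, 0 < (z / κ).re) (f : V)
    (hf : aeval (E κ) (Ps s) f ∈ Z) (hT : f ∈ T) : f ∈ Z := by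
  have hμ : ((-κ) / κ).re < 0 := by simp [hκ]
  have hco : IsCoprime (Ps s) ((X - C (-κ)) ^ s.card) := by
    refine IsCoprime.pow_right ?_
    have := Ps_coprime s {-κ} (by
      intro z hz w hw hzw
      rw [Multiset.mem_singleton] at hw
      have := hs z hz
      rw [hzw, hw] at this
      linarith)
    simpa [Ps] using this
  obtain ⟨a, b, hab⟩ := hco
  have h1 : aeval (E κ) a (aeval (E κ) (Ps s) f) +
      aeval (E κ) ((X - C (-κ)) ^ s.card) (aeval (E κ) b f) = f := by
    rw [← av_mul, ← av_mul, ← LinearMap.add_apply, ← map_add, mul_comm _ b, hab]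
    simp
  have hz := aeval_Z κ a hf
  have hyT : aeval (E κ) ((X - C (-κ)) ^ s.card) (aeval (E κ) b f) ∈ T := by
    rw [← eq_sub_iff_add_eq'] at h1
    rw [h1]
    exact T.sub_mem hT (Z_le_T hz)
  have hyZ : aeval (E κ) b f ∈ Z := by
    refine L2 hκ s hs _ ?_ (fun p hp => L2' hκ _ hμ s.card _ hyT p hp)
    rw [← av_mul, mul_comm, av_mul]
    exact aeval_Z κ b hf
  rw [← h1]
  exact Z.add_mem hz (aeval_Z κ _ hyZ)

lemma L4 {κ : ℂ} (hκ : κ ≠ 0) (s : Multiset ℂ) (f : V)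
    (hf : aeval (E κ) (Ps s) f ∈ Z)
    (h0 : ∀ p : ℂ[X], p.natDegree < s.card → (aeval (E κ) p f : ℝ → ℂ) 0 = 0) : f ∈ Z := by
  induction s using Multiset.induction_on generalizing f with
  | empty => rw [Ps_zero] at hf; simpa using hf
  | cons z s ih =>
    rw [Ps_cons_av] at hf
    refine S3 hκ z f (ih _ hf ?_) ?_
    · intro p hp
      rw [← av_mul]
      refine h0 _ (natDegree_mul_le.trans_lt ?_)
      rw [natDegree_X_sub_C]; simpa using hp
    · simpa using h0 1 (by simp)

lemma L5 {κ : ℂ} (hκ : κ ≠ 0) (s : Multiset ℂ) (h : ℕ → ℂ) :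
    ∃ f : V, aeval (E κ) (Ps s) f = 0 ∧
      ∀ j < s.card, (((E κ) ^ j) f : ℝ → ℂ) 0 = h j := by
  induction s using Multiset.induction_on generalizing h with
  | empty => exact ⟨0, by simp, by simp⟩
  | cons z s ih =>
    obtain ⟨v, hv, hv0⟩ := ih (fun j => h (j + 1) - z * h j)
    obtain ⟨f, hf, hf0⟩ := S4 hκ z (h 0) v
    refine ⟨f, by rw [Ps_cons_av, hf, hv], ?_⟩
    intro j
    induction j with
    | zero => intro _; simpa using hf0
    | succ j ihj =>
      intro hj
      have hj' : j < s.card := by simpa using hj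
      have h1 := ihj (by omega)
      have h2 := hv0 j hj'
      have h3 : E κ f = v + z • f := by
        rw [← hf]; simp [Module.algebraMap_end_apply]
      rw [pow_succ, Module.End.mul_apply, h3, map_add, map_smul]
      simp [h1, h2]

/-- uniqueness: decaying solutions solve the stable half -/
lemma L6 {κ : ℂ} (hκ : κ ≠ 0) (s t : Multiset ℂ) (hs : ∀ z ∈ s, (z / κ).re < 0)
    (ht : ∀ z ∈ t, 0 < (z / κ).re) (f : V) (hf : aeval (E κ) (Ps s * Ps t) f ∈ Z)
    (hT : f ∈ T) : aeval (E κ) (Ps s) f ∈ Z := by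
  have hco : IsCoprime (Ps s) (Ps t) := Ps_coprime s t (by
    intro z hz w hw hzw
    have h1 := hs z hz
    have h2 := ht w hw
    rw [hzw] at h1
    linarith)
  obtain ⟨a, b, hab⟩ := hco
  have h1 : aeval (E κ) (a * Ps s) f + aeval (E κ) (b * Ps t) f = f := by
    rw [← LinearMap.add_apply, ← map_add, hab]; simp
  have h2 : aeval (E κ) (Ps s) (aeval (E κ) (b * Ps t) f) ∈ Z := by
    rw [← av_mul, show Ps s * (b * Ps t) = b * (Ps s * Ps t) by ring, av_mul]
    exact aeval_Z κ b hf
  have h3 : aeval (E κ) (a * Ps s) f ∈ T := by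
    rw [eq_sub_of_add_eq h1]
    exact T.sub_mem hT (L1 hκ s hs _ h2)
  have h4 : aeval (E κ) (a * Ps s) f ∈ Z := by
    refine L3 hκ t ht _ ?_ h3
    rw [← av_mul, show Ps t * (a * Ps s) = a * (Ps s * Ps t) by ring, av_mul]
    exact aeval_Z κ a hf
  have h5 : aeval (E κ) (Ps s) f = aeval (E κ) (Ps s) (aeval (E κ) (a * Ps s) f) +
      aeval (E κ) (Ps s) (aeval (E κ) (b * Ps t) f) := by
    rw [← map_add, h1]
  rw [h5]
  exact Z.add_mem (aeval_Z κ _ h4) h2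

/-- reflection -/
def R : V →ₗ[ℂ] V where
  toFun u := ⟨fun x => (u : ℝ → ℂ) (-x), ContDiff.comp (V_cd u) contDiff_neg⟩
  map_add' u v := by ext x; rfl
  map_smul' c u := by ext x; rfl

lemma R_apply (u : V) (x : ℝ) : (R u : ℝ → ℂ) x = (u : ℝ → ℂ) (-x) := rfl

lemma E_R (κ : ℂ) (u : V) : E (-κ) (R u) = R (E κ u) := by
  ext x
  rw [E_apply, R_apply, E_apply]
  have : deriv (R u : ℝ → ℂ) x = _ := deriv_comp_neg (u : ℝ → ℂ) x
  rw [this]; ring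

lemma aeval_R (κ : ℂ) (P : ℂ[X]) (u : V) : aeval (E (-κ)) P (R u) = R (aeval (E κ) P u) := by
  have hk : ∀ k : ℕ, ((E (-κ)) ^ k) (R u) = R (((E κ) ^ k) u) := by
    intro k
    induction k with
    | zero => simp
    | succ k ih => rw [pow_succ', Module.End.mul_apply, ih, E_R, pow_succ', Module.End.mul_apply]
  rw [aeval_eq_sum_range, LinearMap.sum_apply, aeval_eq_sum_range, LinearMap.sum_apply, map_sum]
  refine Finset.sum_congr rfl fun i _ => ?_
  rw [LinearMap.smul_apply, LinearMap.smul_apply, map_smul, hk]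

lemma factor (m : ℕ) (A : ℂ[X]) (hm : 1 ≤ m) (hdeg : A.natDegree = 2 * m)
    (hp : (A.roots.filter fun z => 0 < z.im).card = m)
    (hn : (A.roots.filter fun z => z.im < 0).card = m) :
    ∃ c : ℂ, c ≠ 0 ∧ A = C c * (Ps (A.roots.filter fun z => 0 < z.im) *
      Ps (A.roots.filter fun z => z.im < 0)) := by
  have hA : A ≠ 0 := by rintro rfl; simp at hdeg; omega
  refine ⟨A.leadingCoeff, leadingCoeff_ne_zero.2 hA, ?_⟩
  set s := A.roots.filter fun z => 0 < z.im with hs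
  set t := A.roots.filter fun z => z.im < 0 with ht
  have hle : s + t ≤ A.roots := by
    rw [Multiset.le_iff_count]
    intro z
    rw [Multiset.count_add, hs, ht, Multiset.count_filter, Multiset.count_filter]
    split_ifs <;> first | omega | (exfalso; linarith)
  have heq : s + t = A.roots := by
    refine Multiset.eq_of_le_of_card_le hle ?_
    rw [Multiset.card_add, hp, hn]
    have := card_roots' A
    omega
  have hsp : A.roots.card = A.natDegree := by
    rw [← heq, Multiset.card_add, hp, hn]; omega
  have := C_leadingCoeff_mul_prod_multiset_X_sub_C hsp
  conv_lhs => rw [← this, ← heq]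
  simp [Ps]

lemma mem_Z_C {κ c : ℂ} (hc : c ≠ 0) (Q : ℂ[X]) (f : V) (h : aeval (E κ) (C c * Q) f ∈ Z) :
    aeval (E κ) Q f ∈ Z := by
  rw [av_mul, aeval_C, Module.algebraMap_end_apply] at h
  exact (Z.smul_mem_iff hc).1 h

/-- Two sets of Cauchy data. -/
lemma data_zero {κ : ℂ} (s t : Multiset ℂ) (hco : IsCoprime (Ps s) (Ps t)) (w₁ w₂ : V)
    (h1 : ∀ p : ℂ[X], (aeval (E κ) (p * Ps s) w₁ : ℝ → ℂ) 0 = 0)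
    (h2 : ∀ p : ℂ[X], (aeval (E κ) (p * Ps t) w₂ : ℝ → ℂ) 0 = 0)
    (h : ∀ p : ℂ[X], p.natDegree < s.card + t.card →
      (aeval (E κ) p w₁ : ℝ → ℂ) 0 = (aeval (E κ) p w₂ : ℝ → ℂ) 0)
    (p : ℂ[X]) (hs : 0 < s.card) : (aeval (E κ) p w₁ : ℝ → ℂ) 0 = 0 := by
  obtain ⟨a, b, hab⟩ := hco
  set r := (p * b) %ₘ Ps s with hr
  set q := p * a + (p * b) /ₘ Ps s * Ps t with hq
  have hp : p = q * Ps s + r * Ps t := by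
    have e := modByMonic_add_div (p * b) (Ps s)
    have : r = p * b - Ps s * ((p * b) /ₘ Ps s) := by
      rw [hr]; linear_combination e
    rw [this, hq]
    linear_combination (-p) * hab
  have hrd : r.natDegree < s.card := by
    have := natDegree_modByMonic_lt (p * b) (Ps_monic s) (by
      intro h1
      have := Ps_natDegree s
      rw [h1] at this
      simp at this
      rw [this] at hs; simp at hs)
    rwa [Ps_natDegree] at this
  have h3 := h (r * Ps t) (natDegree_mul_le.trans_lt (by rw [Ps_natDegree]; omega))
  rw [hp, map_add, LinearMap.add_apply, Submodule.coe_add, Pi.add_apply, h1, h3, h2, add_zero]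

lemma T_R (u : V) : R u ∈ T ↔ Tendsto (u : ℝ → ℂ) atBot (nhds 0) := by
  change Tendsto ((u : ℝ → ℂ) ∘ Neg.neg) atTop (nhds 0) ↔ _
  rw [← tendsto_map'_iff, map_neg_atTop]

lemma Z_R (u : V) : R u ∈ Z ↔ ∀ x < 0, (u : ℝ → ℂ) x = 0 := by
  constructor
  · intro h x hx
    have := h (-x) (by linarith)
    rwa [R_apply, neg_neg] at this
  · intro h x hx
    exact h (-x) (by linarith)

lemma re1 (z : ℂ) : (z / (-I)).re = -z.im := by simp [div_neg]
lemma re2 (z : ℂ) : (z / (- -I)).re = z.im := by simp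

lemma mainU (m : ℕ) (hm : 1 ≤ m) (A₁ A₂ : ℂ[X])
    (hdeg₁ : A₁.natDegree = 2 * m) (hdeg₂ : A₂.natDegree = 2 * m)
    (hroots₁p : (A₁.roots.filter fun z => 0 < z.im).card = m)
    (hroots₁m : (A₁.roots.filter fun z => z.im < 0).card = m)
    (hroots₂p : (A₂.roots.filter fun z => 0 < z.im).card = m)
    (hroots₂m : (A₂.roots.filter fun z => z.im < 0).card = m)
    (w₁ w₂ : V) (h₁ : aeval (E (-I)) A₁ w₁ ∈ Z) (h₂ : R (aeval (E (-I)) A₂ w₂) ∈ Z)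
    (hT₁ : w₁ ∈ T) (hT₂ : R w₂ ∈ T)
    (h : ∀ j < 2 * m, (((E (-I)) ^ j) w₁ : ℝ → ℂ) 0 = (((E (-I)) ^ j) w₂ : ℝ → ℂ) 0) :
    w₁ ∈ Z ∧ R w₂ ∈ Z := by
  have hκ : (-I) ≠ 0 := by simp
  have hκ' : (- -I) ≠ 0 := by simp
  obtain ⟨c₁, hc₁, e₁⟩ := factor m A₁ hm hdeg₁ hroots₁p hroots₁m
  obtain ⟨c₂, hc₂, e₂⟩ := factor m A₂ hm hdeg₂ hroots₂p hroots₂m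
  set s₁ := A₁.roots.filter fun z => 0 < z.im with hs₁
  set t₁ := A₁.roots.filter fun z => z.im < 0 with ht₁
  set s₂ := A₂.roots.filter fun z => 0 < z.im with hs₂
  set t₂ := A₂.roots.filter fun z => z.im < 0 with ht₂
  have k₁ : aeval (E (-I)) (Ps s₁) w₁ ∈ Z := by
    refine L6 hκ s₁ t₁ ?_ ?_ w₁ (mem_Z_C hc₁ _ _ (e₁ ▸ h₁)) hT₁
    · intro z hz; rw [re1]; have := (Multiset.mem_filter.1 hz).2; linarith
    · intro z hz; rw [re1]; have := (Multiset.mem_filter.1 hz).2; linarith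
  have k₂ : aeval (E (- -I)) (Ps t₂) (R w₂) ∈ Z := by
    rw [← aeval_R, e₂, mul_comm (Ps s₂)] at h₂
    refine L6 hκ' t₂ s₂ ?_ ?_ (R w₂) (mem_Z_C hc₂ _ _ h₂) hT₂
    · intro z hz; rw [re2]; exact (Multiset.mem_filter.1 hz).2
    · intro z hz; rw [re2]; exact (Multiset.mem_filter.1 hz).2
  have hp : ∀ p : ℂ[X], p.natDegree < s₁.card + t₂.card →
      (aeval (E (-I)) p w₁ : ℝ → ℂ) 0 = (aeval (E (-I)) p w₂ : ℝ → ℂ) 0 := by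
    intro p hp
    rw [hroots₁p, hroots₂m] at hp
    rw [aeval_eq_sum_range]
    simp only [LinearMap.sum_apply, LinearMap.smul_apply, Submodule.coe_sum, Finset.sum_apply,
      Submodule.coe_smul, Pi.smul_apply]
    refine Finset.sum_congr rfl fun i hi => ?_
    rw [h i (by rw [Finset.mem_range] at hi; omega)]
  have hco : IsCoprime (Ps s₁) (Ps t₂) := Ps_coprime _ _ (by
    intro z hz w hw hzw
    have a1 := (Multiset.mem_filter.1 hz).2
    have a2 := (Multiset.mem_filter.1 hw).2
    rw [hzw] at a1
    linarith)
  have d₁ : ∀ p : ℂ[X], (aeval (E (-I)) p w₁ : ℝ → ℂ) 0 = 0 := by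
    intro p
    refine data_zero s₁ t₂ hco w₁ w₂ ?_ ?_ hp p (by omega)
    · intro p
      rw [av_mul]
      exact Z_nonneg (aeval_Z _ _ k₁) 0 le_rfl
    · intro p
      have := Z_nonneg (aeval_Z (- -I) p k₂) 0 le_rfl
      rwa [← av_mul, aeval_R, R_apply, neg_zero] at this
  refine ⟨L4 hκ s₁ w₁ k₁ fun p _ => d₁ p, L4 hκ' t₂ _ k₂ fun p hpd => ?_⟩
  rw [aeval_R, R_apply, neg_zero, ← hp p (by omega), d₁]

lemma mainE (m : ℕ) (hm : 1 ≤ m) (A₁ A₂ : ℂ[X])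
    (hdeg₁ : A₁.natDegree = 2 * m) (hdeg₂ : A₂.natDegree = 2 * m)
    (hroots₁p : (A₁.roots.filter fun z => 0 < z.im).card = m)
    (hroots₁m : (A₁.roots.filter fun z => z.im < 0).card = m)
    (hroots₂p : (A₂.roots.filter fun z => 0 < z.im).card = m)
    (hroots₂m : (A₂.roots.filter fun z => z.im < 0).card = m) (h : ℕ → ℂ) :
    ∃ w₁ w₂ : V, aeval (E (-I)) A₁ w₁ = 0 ∧ aeval (E (-I)) A₂ w₂ = 0 ∧ w₁ ∈ T ∧ R w₂ ∈ T ∧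
     ∀ j < 2 * m, (((E (-I)) ^ j) w₁ : ℝ → ℂ) 0 - (((E (-I)) ^ j) w₂ : ℝ → ℂ) 0 = h j := by
  have hκ : (-I) ≠ 0 := by simp
  have hκ' : (- -I) ≠ 0 := by simp
  obtain ⟨c₁, hc₁, e₁⟩ := factor m A₁ hm hdeg₁ hroots₁p hroots₁m
  obtain ⟨c₂, hc₂, e₂⟩ := factor m A₂ hm hdeg₂ hroots₂p hroots₂m
  set s₁ := A₁.roots.filter fun z => 0 < z.im with hs₁
  set t₁ := A₁.roots.filter fun z => z.im < 0 with ht₁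
  set s₂ := A₂.roots.filter fun z => 0 < z.im with hs₂
  set t₂ := A₂.roots.filter fun z => z.im < 0 with ht₂
  have hco : IsCoprime (Ps s₁) (Ps t₂) := Ps_coprime _ _ (by
    intro z hz w hw hzw
    have a1 := (Multiset.mem_filter.1 hz).2
    have a2 := (Multiset.mem_filter.1 hw).2
    rw [hzw] at a1
    linarith)
  obtain ⟨a, b, hab⟩ := hco
  obtain ⟨u, hu, hu0⟩ := L5 hκ (s₁ + t₂) h
  have hu' : aeval (E (-I)) (Ps s₁ * Ps t₂) u = 0 := by
    rw [← hu]; simp [Ps]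
  have k₁ : aeval (E (-I)) (Ps s₁) (aeval (E (-I)) (b * Ps t₂) u) = 0 := by
    rw [← av_mul, show Ps s₁ * (b * Ps t₂) = b * (Ps s₁ * Ps t₂) by ring, av_mul, hu', map_zero]
  have k₂ : aeval (E (-I)) (Ps t₂) (aeval (E (-I)) (-a * Ps s₁) u) = 0 := by
    rw [← av_mul, show Ps t₂ * (-a * Ps s₁) = -a * (Ps s₁ * Ps t₂) by ring, av_mul, hu', map_zero]
  refine ⟨aeval (E (-I)) (b * Ps t₂) u, aeval (E (-I)) (-a * Ps s₁) u, ?_, ?_, ?_, ?_, ?_⟩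
  · rw [e₁, mul_comm (Ps s₁), ← mul_assoc, av_mul, k₁, map_zero]
  · rw [e₂, ← mul_assoc, av_mul, k₂, map_zero]
  · refine L1 hκ s₁ ?_ _ (by rw [k₁]; exact Z.zero_mem)
    intro z hz; rw [re1]; have := (Multiset.mem_filter.1 hz).2; linarith
  · refine L1 hκ' t₂ ?_ _ (by rw [aeval_R, k₂, map_zero]; exact Z.zero_mem)
    intro z hz; rw [re2]; exact (Multiset.mem_filter.1 hz).2
  · intro j hj
    have h1 : aeval (E (-I)) (b * Ps t₂) u - aeval (E (-I)) (-a * Ps s₁) u = u := by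
      rw [neg_mul, map_neg, LinearMap.neg_apply, sub_neg_eq_add, ← LinearMap.add_apply,
        ← map_add, add_comm, hab]
      simp
    rw [← Pi.sub_apply, ← Submodule.coe_sub, ← map_sub, h1]
    exact hu0 j (by rw [Multiset.card_add]; omega)

end TR

/-- If `A₁, A₂` are polynomials of degree `2m` having exactly `m` roots in the
open upper half-plane and `m` roots in the open lower half-plane (with multiplicity), then for
every `h ∈ ℂ^{2m}` the transmission ODE problem has exactly one solution pair `(u₁,u₂)`
(uniqueness on the respective half-lines `[0,∞)` and `(-∞,0]`). -/
theorem transmission_ODE_unique_solvability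
    (m : ℕ) (hm : 1 ≤ m) (A₁ A₂ : Polynomial ℂ)
    (hdeg₁ : A₁.natDegree = 2 * m) (hdeg₂ : A₂.natDegree = 2 * m)
    (hroots₁p : (A₁.roots.filter fun z => 0 < z.im).card = m)
    (hroots₁m : (A₁.roots.filter fun z => z.im < 0).card = m)
    (hroots₂p : (A₂.roots.filter fun z => 0 < z.im).card = m)
    (hroots₂m : (A₂.roots.filter fun z => z.im < 0).card = m)
    (h : Fin (2 * m) → ℂ) :
    (∃ u₁ u₂ : ℝ → ℂ, TransSol m A₁ A₂ h u₁ u₂) ∧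
    (∀ u₁ u₂ v₁ v₂ : ℝ → ℂ, TransSol m A₁ A₂ h u₁ u₂ → TransSol m A₁ A₂ h v₁ v₂ →
      EqOn u₁ v₁ (Ici 0) ∧ EqOn u₂ v₂ (Iic 0)) := by
  constructor
  · obtain ⟨w₁, w₂, a₁, a₂, b₁, b₂, c⟩ := TR.mainE m hm A₁ A₂ hdeg₁ hdeg₂ hroots₁p hroots₁m
      hroots₂p hroots₂m (fun j => if hj : j < 2 * m then h ⟨j, hj⟩ else 0)
    refine ⟨w₁, w₂, TR.V_cd w₁, TR.V_cd w₂, ?_, ?_, ?_, b₁, (TR.T_R w₂).1 b₂⟩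
    · intro x _
      rw [TR.polyOp_eq, a₁]; rfl
    · intro x _
      rw [TR.polyOp_eq, a₂]; rfl
    · intro j
      have := c j j.2
      rw [TR.E_pow, TR.E_pow] at this
      simpa using this
  · rintro u₁ u₂ v₁ v₂ ⟨hu₁, hu₂, p₁, p₂, hj, q₁, q₂⟩ ⟨hv₁, hv₂, p₁', p₂', hj', q₁', q₂'⟩
    let U₁ : TR.V := ⟨u₁, hu₁⟩
    let U₂ : TR.V := ⟨u₂, hu₂⟩
    let V₁ : TR.V := ⟨v₁, hv₁⟩
    let V₂ : TR.V := ⟨v₂, hv₂⟩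
    obtain ⟨r₁, r₂⟩ := TR.mainU m hm A₁ A₂ hdeg₁ hdeg₂ hroots₁p hroots₁m
      hroots₂p hroots₂m (U₁ - V₁) (U₂ - V₂) (by
        rw [map_sub]
        refine TR.Z.sub_mem ?_ ?_
        · intro x hx
          rw [← TR.polyOp_eq]; exact p₁ x hx
        · intro x hx
          rw [← TR.polyOp_eq]; exact p₁' x hx) (by
        rw [map_sub, map_sub]
        refine TR.Z.sub_mem ?_ ?_
        · rw [TR.Z_R]
          intro x hx
          rw [← TR.polyOp_eq]; exact p₂ x hx
        · rw [TR.Z_R]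
          intro x hx
          rw [← TR.polyOp_eq]; exact p₂' x hx)
        (TR.T.sub_mem q₁ q₁')
        (by
          rw [map_sub]
          exact TR.T.sub_mem ((TR.T_R U₂).2 q₂) ((TR.T_R V₂).2 q₂'))
        (by
          intro j hjm
          have e1 := hj ⟨j, hjm⟩
          have e2 := hj' ⟨j, hjm⟩
          simp only [map_sub, Submodule.coe_sub, Pi.sub_apply, TR.E_pow]
          simp only [U₁, U₂, V₁, V₂]
          linear_combination e1 - e2)
    constructor
    · intro x hx
      exact sub_eq_zero.1 (TR.Z_nonneg r₁ x hx)
    · intro x hx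
      have := TR.Z_nonneg r₂ (-x) (by simpa using hx)
      rw [TR.R_apply, neg_neg] at this
      exact sub_eq_zero.1 this
end
end

section
/- Let P ∈ ℂ[t] be a polynomial of degree N ≥ 1 having no real roots. If u : ℝ → ℂ is a bounded N-times continuously differentiable function satisfying P(D_n)u = 0 on all of ℝ, then u = 0. -/
noncomputable section
open Complex Filter Set

/-- The space of bounded classical solutions. -/
def bddSol (P : Polynomial ℂ) : Submodule ℂ (ℝ → ℂ) where
  carrier := {u | ContDiff ℝ P.natDegree u ∧ (∃ C : ℝ, ∀ x, ‖u x‖ ≤ C) ∧ ∀ x, polyOp P u x = 0}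
  zero_mem' := by
    refine ⟨contDiff_const, ⟨0, by simp⟩, fun x => ?_⟩
    simp [polyOp]
  add_mem' := by
    rintro u v ⟨hu, ⟨C, hC⟩, hu0⟩ ⟨hv, ⟨C', hC'⟩, hv0⟩
    refine ⟨hu.add hv, ⟨C + C', fun x => (norm_add_le _ _).trans (add_le_add (hC x) (hC' x))⟩,
      fun x => ?_⟩
    have key : polyOp P (u + v) x = polyOp P u x + polyOp P v x := by
      unfold polyOp
      rw [← Finset.sum_add_distrib]
      refine Finset.sum_congr rfl fun k hk => ?_
      have hk' : k ≤ P.natDegree := Nat.lt_succ_iff.mp (Finset.mem_range.mp hk)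
      have hk2 : (k : WithTop ℕ∞) ≤ (P.natDegree : WithTop ℕ∞) := by exact_mod_cast hk'
      rw [iteratedDeriv_add (hu.of_le hk2).contDiffAt (hv.of_le hk2).contDiffAt]
      ring
    rw [key, hu0, hv0, add_zero]
  smul_mem' := by
    rintro c u ⟨hu, ⟨C, hC⟩, hu0⟩
    refine ⟨hu.const_smul c, ⟨‖c‖ * C, fun x => ?_⟩, fun x => ?_⟩
    · rw [Pi.smul_apply, norm_smul]
      exact mul_le_mul_of_nonneg_left (hC x) (norm_nonneg _)
    have key : polyOp P (c • u) x = c * polyOp P u x := by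
      unfold polyOp
      rw [Finset.mul_sum]
      refine Finset.sum_congr rfl fun k hk => ?_
      rw [iteratedDeriv_const_smul_field, smul_eq_mul]
      ring
    rw [key, hu0, mul_zero]

/-- Uniqueness for the Cauchy problem. -/
lemma sol_unique (P : Polynomial ℂ) (hN : 1 ≤ P.natDegree) (u : ℝ → ℂ)
    (hu : ContDiff ℝ P.natDegree u) (h0 : ∀ x, polyOp P u x = 0)
    (hinit : ∀ k < P.natDegree, iteratedDeriv k u 0 = 0) : u = 0 := by
  have hP : P ≠ 0 := by rintro rfl; simp at hN
  set N := P.natDegree with hNdef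
  set a : ℂ := P.coeff N * (-I) ^ N with ha
  have ha0 : a ≠ 0 := by
    refine mul_ne_zero ?_ (pow_ne_zero _ (by simp))
    simpa [hNdef] using hP
  let A : (Fin N → ℂ) →ₗ[ℝ] (Fin N → ℂ) := LinearMap.pi fun k =>
    if h : (k : ℕ) + 1 < N then LinearMap.proj ⟨k + 1, h⟩
    else ∑ j : Fin N, (LinearMap.mulLeft ℝ (-a⁻¹ * (P.coeff j * (-I) ^ (j : ℕ)))).comp
      (LinearMap.proj j)
  let L : (Fin N → ℂ) →L[ℝ] (Fin N → ℂ) := LinearMap.toContinuousLinearMap A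
  let U : ℝ → Fin N → ℂ := fun x k => iteratedDeriv k u x
  have hder : ∀ t, HasDerivAt U (L (U t)) t := by
    intro t
    rw [hasDerivAt_pi]
    intro k
    have h1 : HasDerivAt (iteratedDeriv k u) (iteratedDeriv (k + 1) u t) t := by
      rw [iteratedDeriv_succ]
      exact (hu.differentiable_iteratedDeriv k (by exact_mod_cast k.2) t).hasDerivAt
    have h2 : L (U t) k = iteratedDeriv (k + 1) u t := by
      change A (U t) k = _
      by_cases h : (k : ℕ) + 1 < N
      · simp [A, h, U]
      · have hk : (k : ℕ) + 1 = N := by have := k.2; omega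
        have e := h0 t
        unfold polyOp at e
        rw [← hNdef, Finset.sum_range_succ, Finset.sum_range] at e
        rw [hk]
        simp only [A, LinearMap.pi_apply, dif_neg h, LinearMap.sum_apply, LinearMap.comp_apply,
          LinearMap.proj_apply, LinearMap.mulLeft_apply, U, mul_assoc]
        rw [← Finset.mul_sum]
        have e2 : ∑ i : Fin N, P.coeff i * ((-I) ^ (i : ℕ) * iteratedDeriv i u t)
            = - (a * iteratedDeriv N u t) := by
          rw [eq_neg_iff_add_eq_zero, ← e, ha]; ring
        rw [e2]
        field_simp
    rw [h2]
    exact h1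
  have hU : U = fun _ => 0 := by
    refine ODE_solution_unique_univ (v := fun _ => L) (s := fun _ => Set.univ) (t₀ := 0)
      (K := ‖L‖₊) (fun t => L.lipschitz.lipschitzOnWith) (fun t => ⟨hder t, trivial⟩)
      (fun t => ⟨?_, trivial⟩) ?_
    · rw [map_zero]; exact hasDerivAt_const _ _
    · funext k; exact hinit k k.2
  funext x
  have := congrFun (congrFun hU x) ⟨0, hN⟩
  simpa [U] using this

lemma bddSol_finite (P : Polynomial ℂ) (hN : 1 ≤ P.natDegree) :
    FiniteDimensional ℂ (bddSol P) := by
  let T : bddSol P →ₗ[ℂ] (Fin P.natDegree → ℂ) :=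
    { toFun := fun u k => iteratedDeriv k u.1 0
      map_add' := by
        rintro ⟨u, hu⟩ ⟨v, hv⟩
        funext k
        have hk2 : ((k : ℕ) : WithTop ℕ∞) ≤ (P.natDegree : WithTop ℕ∞) := by
          exact_mod_cast k.2.le
        exact iteratedDeriv_add (hu.1.of_le hk2).contDiffAt (hv.1.of_le hk2).contDiffAt
      map_smul' := by
        rintro c ⟨u, hu⟩
        funext k
        exact iteratedDeriv_const_smul_field c u }
  refine FiniteDimensional.of_injective T ?_
  rw [← LinearMap.ker_eq_bot, LinearMap.ker_eq_bot']
  rintro ⟨u, hu⟩ h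
  apply Subtype.ext
  exact sol_unique P hN u hu.1 hu.2.2 fun k hk => congrFun h ⟨k, hk⟩

lemma bddSol_translate (P : Polynomial ℂ) {u : ℝ → ℂ} (hu : u ∈ bddSol P) (s : ℝ) :
    (fun x => u (x + s)) ∈ bddSol P := by
  obtain ⟨h1, ⟨C, hC⟩, h3⟩ := hu
  refine ⟨h1.comp (contDiff_id.add contDiff_const), ⟨C, fun x => hC _⟩, fun x => ?_⟩
  rw [← h3 (x + s)]
  unfold polyOp
  simp only [iteratedDeriv_comp_add_const]

lemma bddSol_differentiable (P : Polynomial ℂ) (hN : 1 ≤ P.natDegree) {u : ℝ → ℂ}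
    (hu : u ∈ bddSol P) : Differentiable ℝ u :=
  hu.1.differentiable (by exact_mod_cast (by omega : P.natDegree ≠ 0))

lemma bddSol_deriv (P : Polynomial ℂ) (hN : 1 ≤ P.natDegree) {u : ℝ → ℂ}
    (hu : u ∈ bddSol P) : deriv u ∈ bddSol P := by
  haveI := bddSol_finite P hN
  have hcl : IsClosed (bddSol P : Set (ℝ → ℂ)) := Submodule.closed_of_finiteDimensional _
  have ht : Tendsto (fun t : ℝ => ((t⁻¹ : ℝ) : ℂ) • ((fun x => u (x + t)) - u))
      (nhdsWithin 0 {0}ᶜ) (nhds (deriv u)) := by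
    rw [tendsto_pi_nhds]
    intro x
    have := ((bddSol_differentiable P hN hu) x).hasDerivAt.tendsto_slope_zero
    simpa using this
  exact hcl.mem_of_tendsto ht (Eventually.of_forall fun t =>
    (bddSol P).smul_mem _ ((bddSol P).sub_mem (bddSol_translate P hu t) hu))

/-- Differentiation as an endomorphism of the space of bounded solutions. -/
def derivEnd (P : Polynomial ℂ) (hN : 1 ≤ P.natDegree) : Module.End ℂ (bddSol P) where
  toFun u := ⟨deriv u.1, bddSol_deriv P hN u.2⟩
  map_add' u v := by
    apply Subtype.ext
    funext x
    exact deriv_add (bddSol_differentiable P hN u.2 x) (bddSol_differentiable P hN v.2 x)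
  map_smul' c u := by
    apply Subtype.ext
    funext x
    exact deriv_const_smul c (bddSol_differentiable P hN u.2 x)

lemma bddSol_eigen (P : Polynomial ℂ) (hN : 1 ≤ P.natDegree)
    (hnoreal : ∀ x : ℝ, P.eval (x : ℂ) ≠ 0) {u : ℝ → ℂ} (hu : u ∈ bddSol P) (m : ℂ)
    (hm : deriv u = m • u) : u = 0 := by
  have hd := bddSol_differentiable P hN hu
  by_contra hne
  have hit : ∀ k, iteratedDeriv k u = m ^ k • u := by
    intro k
    induction k with
    | zero => simp
    | succ k ih =>
      rw [iteratedDeriv_succ, ih]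
      funext x
      rw [deriv_const_smul _ (hd x), hm]
      simp only [Pi.smul_apply, smul_eq_mul]
      ring
  have hroot : P.eval (-I * m) = 0 := by
    obtain ⟨x, hx⟩ := Function.ne_iff.mp hne
    have e := hu.2.2 x
    have : polyOp P u x = P.eval (-I * m) * u x := by
      rw [Polynomial.eval_eq_sum_range, Finset.sum_mul]
      unfold polyOp
      refine Finset.sum_congr rfl fun k _ => ?_
      rw [hit]
      simp only [Pi.smul_apply, smul_eq_mul, mul_pow]
      ring
    rw [this] at e
    exact (mul_eq_zero.mp e).resolve_right hx
  have hre : m.re ≠ 0 := by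
    intro h
    apply hnoreal m.im
    rw [← hroot]
    congr 1
    apply Complex.ext <;> simp [h]
  have hconst : ∀ x : ℝ, u x = u 0 * Complex.exp (m * x) := by
    have hg : ∀ x : ℝ, HasDerivAt (fun x : ℝ => u x * Complex.exp (-(m * x))) 0 x := by
      intro x
      have h1 : HasDerivAt u (m * u x) x := by
        have := (hd x).hasDerivAt
        rwa [hm] at this
      have h2 : HasDerivAt (fun x : ℝ => Complex.exp (-(m * x)))
          (Complex.exp (-(m * x)) * -(m * 1)) x :=
        (((Complex.ofRealCLM.hasDerivAt (x := x)).const_mul m).neg).cexp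
      refine (h1.mul h2).congr_deriv ?_
      ring
    intro x
    have h := is_const_of_deriv_eq_zero (fun y => (hg y).differentiableAt)
      (fun y => (hg y).deriv) x 0
    simp only [ofReal_zero, mul_zero, neg_zero, Complex.exp_zero, mul_one] at h
    rw [← h, mul_assoc, ← Complex.exp_add]
    simp
  have hu0 : u 0 ≠ 0 := by
    intro h
    apply hne
    funext x
    rw [hconst x, h]
    simp
  obtain ⟨C, hC⟩ := hu.2.1
  have hpos : 0 < ‖u 0‖ := norm_pos_iff.mpr hu0
  have h := hC ((C / ‖u 0‖) / m.re)
  rw [hconst, norm_mul, Complex.norm_exp] at h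
  have e1 : (m * (((C / ‖u 0‖) / m.re : ℝ) : ℂ)).re = C / ‖u 0‖ := by
    rw [Complex.re_mul_ofReal]
    field_simp
  rw [e1] at h
  have h3 := Real.add_one_le_exp (C / ‖u 0‖)
  have h4 : ‖u 0‖ * (C / ‖u 0‖ + 1) = C + ‖u 0‖ := by field_simp
  nlinarith

/-- If `P` is a polynomial of degree `N ≥ 1` without real roots and `u : ℝ → ℂ`
is a bounded `N`-times continuously differentiable function with `P(D_n)u = 0` on all of `ℝ`,
then `u = 0`. -/
theorem bounded_solution_of_ODE_without_real_roots_is_zero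
    (N : ℕ) (hN : 1 ≤ N) (P : Polynomial ℂ) (hdeg : P.natDegree = N)
    (hnoreal : ∀ x : ℝ, P.eval (x : ℂ) ≠ 0)
    (u : ℝ → ℂ) (hreg : ContDiff ℝ N u)
    (hbdd : ∃ C : ℝ, ∀ x : ℝ, ‖u x‖ ≤ C)
    (hode : ∀ x : ℝ, polyOp P u x = 0) :
    u = 0 := by
  subst hdeg
  haveI := bddSol_finite P hN
  have hu : u ∈ bddSol P := ⟨hreg, hbdd, hode⟩
  by_contra hne
  haveI : Nontrivial (bddSol P) :=
    ⟨⟨⟨u, hu⟩, 0, fun h => hne (congrArg Subtype.val h)⟩⟩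
  obtain ⟨m, hm⟩ := Module.End.exists_eigenvalue (derivEnd P hN)
  obtain ⟨v, hv⟩ := hm.exists_hasEigenvector
  apply hv.2
  apply Subtype.ext
  exact bddSol_eigen P hN hnoreal v.2 m (congrArg Subtype.val hv.apply_eq_smul)
end
end

section
/- Let n ≥ 2, m ≥ 1, θ ∈ [0,π), and let A₁ be a properly elliptic homogeneous symbol of order 2m and A₂ a properly parameter-elliptic symbol of order 2m on Σ̄. Fix ξ' ∈ ℝ^{n−1} \ {0} and q ∈ Σ̄. Then there exists exactly one family of smooth functions ω_{ik} : [0,∞) → ℂ (i = 1,2; k = 1,…,2m) such that A₁(ξ',D_n)ω_{1k} = 0 and A₂(ξ',D_n,q)ω_{2k} = 0 on (0,∞) for every k, the transmission conditions D_n^{j−1}(ω_{1k} + (−1)^j ω_{2k})(0) = δ_{jk} hold for all j,k = 1,…,2m, and ω_{1k}(x_n) → 0, ω_{2k}(x_n) → 0 as x_n → ∞. (This is the fundamental solution of the transmission model problem.) -/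
noncomputable section
open Complex Filter Set

/-- The closed sector `Σ̄ = {q ∈ ℂ : |arg q| ≤ θ/(2m)}` (which contains `0`). -/
def sector (m : ℕ) (θ : ℝ) : Set ℂ := {q : ℂ | |q.arg| ≤ θ / (2 * m)}

/-- The polynomial `t ↦ A₁(ξ', t)` in the last (co-normal) variable, the first `n-1`
variables of the symbol `A₁` being evaluated at `ξ'`. -/
def polA1 (n : ℕ) (A : MvPolynomial (Fin n) ℂ) (ξ : EuclideanSpace ℝ (Fin (n - 1))) :
    Polynomial ℂ :=
  MvPolynomial.aeval (fun i : Fin n =>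
    if h : (i : ℕ) < n - 1 then Polynomial.C ((ξ ⟨i, h⟩ : ℝ) : ℂ) else Polynomial.X) A

/-- The polynomial `t ↦ A₂(ξ', t, q)`: in the symbol `A₂`, the variables `0,…,n-2` are
evaluated at `ξ'`, the variable `n-1` (the co-normal variable `ξ_n`) becomes the
indeterminate, and the last variable (the parameter) is evaluated at `q`. -/
def polA2 (n : ℕ) (A : MvPolynomial (Fin (n + 1)) ℂ) (ξ : EuclideanSpace ℝ (Fin (n - 1)))
    (q : ℂ) : Polynomial ℂ :=
  MvPolynomial.aeval (fun i : Fin (n + 1) =>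
    if h : (i : ℕ) < n - 1 then Polynomial.C ((ξ ⟨i, h⟩ : ℝ) : ℂ)
    else if (i : ℕ) = n - 1 then Polynomial.X else Polynomial.C q) A

/-- Solution predicate for the fundamental solution of the (reflected) transmission model
problem at frequency `ξ'` and parameter `q`: for each column `k`, the row `ω 0 k` solves
the elliptic ODE, `ω 1 k` solves the parameter-elliptic ODE, the transmission conditions
`D_n^{j-1}(ω_{1k} + (-1)^j ω_{2k})(0) = δ_{jk}` hold, and both decay at `∞`. -/
def FundSol (n m : ℕ) (A₁ : MvPolynomial (Fin n) ℂ) (A₂ : MvPolynomial (Fin (n + 1)) ℂ)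
    (ξ : EuclideanSpace ℝ (Fin (n - 1))) (q : ℂ) (ω : Fin 2 → Fin (2 * m) → ℝ → ℂ) : Prop :=
  (∀ i k, ContDiff ℝ (⊤ : ℕ∞) (ω i k)) ∧
  (∀ k, ∀ x : ℝ, 0 < x → polyOp (polA1 n A₁ ξ) (ω 0 k) x = 0) ∧
  (∀ k, ∀ x : ℝ, 0 < x → polyOp (polA2 n A₂ ξ q) (ω 1 k) x = 0) ∧
  (∀ j k : Fin (2 * m),
    (-Complex.I) ^ (j : ℕ) * iteratedDeriv (j : ℕ) (ω 0 k) 0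
      + (-1 : ℂ) ^ ((j : ℕ) + 1) * ((-Complex.I) ^ (j : ℕ) * iteratedDeriv (j : ℕ) (ω 1 k) 0)
      = if j = k then 1 else 0) ∧
  (∀ i k, Tendsto (ω i k) atTop (nhds 0))


/-- Smooth functions on the line. -/
def SmV : Submodule ℂ (ℝ → ℂ) where
  carrier := {u | ContDiff ℝ (⊤ : ℕ∞) u}
  add_mem' := fun {a b} (ha : ContDiff ℝ (⊤ : ℕ∞) a) (hb : ContDiff ℝ (⊤ : ℕ∞) b) => ha.add hb
  zero_mem' := (contDiff_const : ContDiff ℝ (⊤ : ℕ∞) (fun _ : ℝ => (0 : ℂ)))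
  smul_mem' := fun c u (hu : ContDiff ℝ (⊤ : ℕ∞) u) => hu.const_smul c

theorem SmV.smooth (u : SmV) : ContDiff ℝ (⊤ : ℕ∞) (u : ℝ → ℂ) := u.2

theorem SmV.differentiable (u : SmV) : Differentiable ℝ (u : ℝ → ℂ) :=
  (SmV.smooth u).differentiable (by simp)

theorem SmV.cont (u : SmV) : Continuous (u : ℝ → ℂ) := (SmV.smooth u).continuous

/-- The operator `-i d/dx` on smooth functions. -/
def DD : SmV →ₗ[ℂ] SmV where
  toFun u := ⟨fun x => -Complex.I * deriv (u : ℝ → ℂ) x,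
    contDiff_const.mul (contDiff_infty_iff_deriv.1 (SmV.smooth u)).2⟩
  map_add' u v := by
    ext x
    have := deriv_add ((SmV.differentiable u) x) ((SmV.differentiable v) x)
    simp [this, mul_add]
  map_smul' c u := by
    ext x
    have := deriv_const_smul c ((SmV.differentiable u) x)
    simp [this]
    ring

theorem DD_apply (u : SmV) (x : ℝ) : (DD u : ℝ → ℂ) x = -Complex.I * deriv (u : ℝ → ℂ) x := rfl

theorem SmV.hasDerivAt (u : SmV) (x : ℝ) :
    HasDerivAt (u : ℝ → ℂ) (Complex.I * (DD u : ℝ → ℂ) x) x := by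
  have := ((SmV.differentiable u) x).hasDerivAt
  rw [DD_apply, ← mul_assoc]
  simpa using this

theorem DD_pow_apply (k : ℕ) (u : SmV) (x : ℝ) :
    ((DD ^ k) u : ℝ → ℂ) x = (-Complex.I) ^ k * iteratedDeriv k (u : ℝ → ℂ) x := by
  induction k generalizing x with
  | zero => simp
  | succ k ih =>
    rw [pow_succ', Module.End.mul_apply, DD_apply]
    have : (((DD ^ k) u : SmV) : ℝ → ℂ) =
      fun x => (-Complex.I) ^ k * iteratedDeriv k (u : ℝ → ℂ) x := funext ih
    rw [this, iteratedDeriv_succ, pow_succ', deriv_const_mul_field]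
    ring

theorem polyOp_eq (P : Polynomial ℂ) (u : SmV) (x : ℝ) :
    polyOp P u x = ((Polynomial.aeval DD P) u : ℝ → ℂ) x := by
  rw [Polynomial.aeval_eq_sum_range, polyOp]
  simp [LinearMap.sum_apply, DD_pow_apply, Finset.sum_apply]

/-- The monic polynomial with given roots. -/
def PS (s : Multiset ℂ) : Polynomial ℂ := (s.map fun a => Polynomial.X - Polynomial.C a).prod

/-- The corresponding operator. -/
def OS (s : Multiset ℂ) : SmV →ₗ[ℂ] SmV := Polynomial.aeval DD (PS s)

theorem OS_zero (u : SmV) : OS 0 u = u := by simp [OS, PS]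

theorem OS_cons (a : ℂ) (s : Multiset ℂ) (u : SmV) :
    OS (a ::ₘ s) u = OS s (DD u - a • u) := by
  simp only [OS, PS, Multiset.map_cons, Multiset.prod_cons]
  rw [mul_comm, map_mul, Module.End.mul_apply]
  simp [Module.algebraMap_end_apply]

theorem OS_add (s t : Multiset ℂ) (u : SmV) : OS (s + t) u = OS s (OS t u) := by
  simp [OS, PS, Module.End.mul_apply]

theorem OS_comm (s t : Multiset ℂ) (u : SmV) : OS s (OS t u) = OS t (OS s u) := by
  rw [← OS_add, add_comm, OS_add]

theorem OS_DD (s : Multiset ℂ) (u : SmV) : OS s (DD u) = DD (OS s u) := by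
  have : (Polynomial.aeval DD (PS s * Polynomial.X)) u =
    (Polynomial.aeval DD (Polynomial.X * PS s)) u := by rw [mul_comm]
  simpa [Module.End.mul_apply, OS] using this

theorem hasDerivAt_cexp (a : ℂ) (x : ℝ) :
    HasDerivAt (fun x : ℝ => Complex.exp (a * x)) (a * Complex.exp (a * x)) x := by
  have h : HasDerivAt (fun x : ℝ => a * (x : ℂ)) (a * 1) x :=
    (Complex.ofRealCLM.hasDerivAt (x := x)).const_mul a
  have := h.cexp
  rw [mul_one, mul_comm] at this
  exact this

theorem contDiff_cexp (a : ℂ) : ContDiff ℝ (⊤ : ℕ∞) (fun x : ℝ => Complex.exp (a * x)) :=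
  (contDiff_const.mul Complex.ofRealCLM.contDiff).cexp

/-- derivative of the conjugated function -/
theorem conj_hasDerivAt (a : ℂ) (u : SmV) (x : ℝ) :
    HasDerivAt (fun x : ℝ => Complex.exp (-(Complex.I * a) * x) * (u : ℝ → ℂ) x)
      (Complex.exp (-(Complex.I * a) * x) * (Complex.I * ((DD u - a • u : SmV) : ℝ → ℂ) x)) x := by
  have := (hasDerivAt_cexp (-(Complex.I * a)) x).mul ((SmV.hasDerivAt u) x)
  have hx : ((DD u - a • u : SmV) : ℝ → ℂ) x = (DD u : ℝ → ℂ) x - a * (u : ℝ → ℂ) x := rfl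
  rw [hx]
  refine this.congr_deriv ?_
  ring

/-- first order uniqueness on convex sets -/
theorem first_order (a : ℂ) (u : SmV) (S : Set ℝ) (hS : Convex ℝ S) (h0 : (0 : ℝ) ∈ S)
    (h : ∀ x ∈ S, ((DD u - a • u : SmV) : ℝ → ℂ) x = 0) :
    ∀ x ∈ S, (u : ℝ → ℂ) x = Complex.exp (Complex.I * a * x) * (u : ℝ → ℂ) 0 := by
  intro x hx
  have := Convex.norm_image_sub_le_of_norm_hasDerivWithin_le (C := 0)
    (fun y _ => (conj_hasDerivAt a u y).hasDerivWithinAt (s := S))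
    (fun y hy => by rw [h y hy]; simp) hS h0 hx
  simp only [zero_mul, norm_le_zero_iff, sub_eq_zero] at this
  simp only [ofReal_zero, mul_zero, Complex.exp_zero, one_mul] at this
  rw [← this, ← mul_assoc, ← Complex.exp_add]
  simp

theorem ode_unique (s : Multiset ℂ) (u : SmV) (S : Set ℝ) (hS : Convex ℝ S) (h0 : (0 : ℝ) ∈ S)
    (h : ∀ x ∈ S, (OS s u : ℝ → ℂ) x = 0)
    (hd : ∀ j < s.card, ((DD ^ j) u : ℝ → ℂ) 0 = 0) : ∀ x ∈ S, (u : ℝ → ℂ) x = 0 := by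
  induction s using Multiset.induction_on generalizing u with
  | empty => simpa [OS_zero] using h
  | cons a s ih =>
    have h1 := ih (DD u - a • u) (by simpa only [OS_cons] using h) (by
      intro j hj
      have e1 := hd j (by simp; omega)
      have e2 := hd (j + 1) (by simp; omega)
      rw [pow_succ, Module.End.mul_apply] at e2
      simp [map_sub, e1, e2])
    intro x hx
    rw [first_order a u S hS h0 h1 x hx]
    have := hd 0 (by simp)
    simp at this
    simp [this]

theorem first_order_exists (a : ℂ) (f : SmV) (c : ℂ) :
    ∃ u : SmV, DD u - a • u = f ∧ (u : ℝ → ℂ) 0 = c := by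
  let g : ℝ → ℂ := fun s => Complex.exp (-(Complex.I * a) * s) * (Complex.I * (f : ℝ → ℂ) s)
  have hg : ContDiff ℝ (⊤ : ℕ∞) g := (contDiff_cexp _).mul (contDiff_const.mul (SmV.smooth f))
  have hG : ∀ x, HasDerivAt (fun x : ℝ => ∫ s in (0 : ℝ)..x, g s) (g x) x := fun x =>
    intervalIntegral.integral_hasDerivAt_right (hg.continuous.intervalIntegrable _ _)
      (hg.continuous.stronglyMeasurableAtFilter _ _) hg.continuous.continuousAt
  have hGs : ContDiff ℝ (⊤ : ℕ∞) (fun x : ℝ => ∫ s in (0 : ℝ)..x, g s) := by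
    rw [contDiff_infty_iff_deriv]
    refine ⟨fun x => (hG x).differentiableAt, ?_⟩
    rw [funext fun x => (hG x).deriv]
    exact hg
  let u : SmV := ⟨fun x => Complex.exp (Complex.I * a * x) * (c + ∫ s in (0 : ℝ)..x, g s),
    (contDiff_cexp _).mul (contDiff_const.add hGs)⟩
  refine ⟨u, ?_, ?_⟩
  · ext x
    have h1 : HasDerivAt (u : ℝ → ℂ) _ x :=
      (hasDerivAt_cexp (Complex.I * a) x).mul ((hG x).const_add c)
    have h2 := h1.deriv
    have hu : (u : ℝ → ℂ) x = Complex.exp (Complex.I * a * x) * (c + ∫ s in (0 : ℝ)..x, g s) := rfl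
    have he : Complex.exp (Complex.I * a * x) * g x = Complex.I * (f : ℝ → ℂ) x := by
      simp only [g]
      rw [← mul_assoc, ← Complex.exp_add]
      simp
    have : ((DD u - a • u : SmV) : ℝ → ℂ) x = (DD u : ℝ → ℂ) x - a * (u : ℝ → ℂ) x := by simp
    rw [this, DD_apply, h2, he, hu]
    linear_combination (-(a * Complex.exp (Complex.I * a * x) * (c + ∫ s in (0 : ℝ)..x, g s))
      - (f : ℝ → ℂ) x) * Complex.I_mul_I
  · simp [u]

theorem ode_exists (s : Multiset ℂ) (c : ℕ → ℂ) :
    ∃ u : SmV, OS s u = 0 ∧ ∀ j < s.card, ((DD ^ j) u : ℝ → ℂ) 0 = c j := by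
  induction s using Multiset.induction_on generalizing c with
  | empty => exact ⟨0, by simp, by simp⟩
  | cons a s ih =>
    obtain ⟨v, hv, hv'⟩ := ih fun j => c (j + 1) - a * c j
    obtain ⟨u, hu, hu0⟩ := first_order_exists a v (c 0)
    refine ⟨u, by rw [OS_cons, hu, hv], ?_⟩
    intro j
    induction j with
    | zero => intro _; simpa using hu0
    | succ j ihj =>
      intro hj
      simp at hj
      have h1 := ihj (by simp; omega)
      have h2 := hv' j hj
      rw [← hu] at h2
      rw [pow_succ, Module.End.mul_apply]
      simp [map_sub, h1] at h2
      exact h2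

/-- solution space -/
def KS (s : Multiset ℂ) : Submodule ℂ SmV := LinearMap.ker (OS s)

theorem mem_KS (s : Multiset ℂ) (u : SmV) : u ∈ KS s ↔ OS s u = 0 := LinearMap.mem_ker

/-- evaluation at a point -/
def ev (x : ℝ) : SmV →ₗ[ℂ] ℂ where
  toFun u := (u : ℝ → ℂ) x
  map_add' _ _ := rfl
  map_smul' _ _ := rfl

theorem ev_apply (x : ℝ) (u : SmV) : ev x u = (u : ℝ → ℂ) x := rfl

/-- Cauchy data -/
def CD (s : Multiset ℂ) : KS s →ₗ[ℂ] (Fin s.card → ℂ) :=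
  LinearMap.pi fun j => (ev 0 ∘ₗ (DD ^ (j : ℕ))) ∘ₗ (KS s).subtype

theorem unique_univ (s : Multiset ℂ) (u : SmV) (h : OS s u = 0)
    (hd : ∀ j < s.card, ((DD ^ j) u : ℝ → ℂ) 0 = 0) : u = 0 := by
  ext x
  exact ode_unique s u Set.univ convex_univ trivial (by simp [h]) hd x trivial

theorem CD_bij (s : Multiset ℂ) : Function.Bijective (CD s) := by
  constructor
  · rw [injective_iff_map_eq_zero]
    rintro ⟨u, hu⟩ h
    have := unique_univ s u hu (fun j hj => congrFun h ⟨j, hj⟩)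
    simp [this]
  · intro c
    obtain ⟨u, hu, hc⟩ := ode_exists s fun j => if h : j < s.card then c ⟨j, h⟩ else 0
    refine ⟨⟨u, hu⟩, ?_⟩
    ext j
    have := hc j j.2
    rw [dif_pos j.2] at this
    exact this

instance KS_fin (s : Multiset ℂ) : FiniteDimensional ℂ (KS s) :=
  Module.Finite.of_injective (CD s) (CD_bij s).1

theorem KS_finrank (s : Multiset ℂ) : Module.finrank ℂ (KS s) = s.card := by
  rw [(LinearEquiv.ofBijective (CD s) (CD_bij s)).finrank_eq]
  simp

/-- translation -/
def Tr (h : ℝ) (u : SmV) : SmV :=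
  ⟨fun x => (u : ℝ → ℂ) (x + h), (SmV.smooth u).comp (contDiff_id.add contDiff_const)⟩

theorem Tr_apply (h : ℝ) (u : SmV) (x : ℝ) : (Tr h u : ℝ → ℂ) x = (u : ℝ → ℂ) (x + h) := rfl

theorem DD_Tr (h : ℝ) (u : SmV) : DD (Tr h u) = Tr h (DD u) := by
  ext x
  rw [Tr_apply, DD_apply, DD_apply]
  congr 1
  exact deriv_comp_add_const (u : ℝ → ℂ) h x

theorem OS_Tr (s : Multiset ℂ) (h : ℝ) (u : SmV) : OS s (Tr h u) = Tr h (OS s u) := by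
  induction s using Multiset.induction_on generalizing u with
  | empty => simp [OS_zero]
  | cons a s ih =>
    rw [OS_cons, OS_cons, ← ih, DD_Tr]
    rfl

/-- reflection -/
def Rf (u : SmV) : SmV :=
  ⟨fun x => (u : ℝ → ℂ) (-x), (SmV.smooth u).comp contDiff_neg⟩

theorem Rf_apply (u : SmV) (x : ℝ) : (Rf u : ℝ → ℂ) x = (u : ℝ → ℂ) (-x) := rfl

theorem DD_Rf (u : SmV) : DD (Rf u) = - Rf (DD u) := by
  ext x
  have : ((- Rf (DD u) : SmV) : ℝ → ℂ) x = - (DD u : ℝ → ℂ) (-x) := rfl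
  rw [this, DD_apply, DD_apply]
  have := deriv_comp_neg (u : ℝ → ℂ) x
  have h2 : deriv (Rf u : ℝ → ℂ) x = - deriv (u : ℝ → ℂ) (-x) := this
  rw [h2]
  ring

theorem Rf_neg (u : SmV) : Rf (-u) = - Rf u := rfl

theorem DD_pow_Rf (j : ℕ) (u : SmV) : (DD ^ j) (Rf u) = (-1 : ℂ) ^ j • Rf ((DD ^ j) u) := by
  induction j generalizing u with
  | zero => simp
  | succ j ih =>
    rw [pow_succ, Module.End.mul_apply, DD_Rf, map_neg, ih, pow_succ, Module.End.mul_apply]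
    rw [mul_neg_one]
    exact (neg_smul _ _).symm

theorem OS_Rf (s : Multiset ℂ) (u : SmV) (h : OS s u = 0) :
    OS (s.map fun a => -a) (Rf u) = 0 := by
  induction s using Multiset.induction_on generalizing u with
  | empty =>
    rw [OS_zero] at h
    subst h
    simp only [Multiset.map_zero, OS_zero]
    rfl
  | cons a s ih =>
    rw [OS_cons] at h
    have h1 := ih _ h
    rw [Multiset.map_cons, OS_cons, DD_Rf]
    have : - Rf (DD u) - (-a) • Rf u = - Rf (DD u - a • u) := by
      ext x
      show - (DD u : ℝ → ℂ) (-x) - (-a) * (u : ℝ → ℂ) (-x) =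
        -((DD u : ℝ → ℂ) (-x) - a * (u : ℝ → ℂ) (-x))
      ring
    rw [this, map_neg, h1, neg_zero]

theorem PS_eval_eq_zero (s : Multiset ℂ) (a : ℂ) : (PS s).eval a = 0 ↔ a ∈ s := by
  rw [PS, Polynomial.eval_multiset_prod, Multiset.prod_eq_zero_iff]
  simp [sub_eq_zero]

theorem KS_disjoint (s t : Multiset ℂ) (h : ∀ a ∈ s, a ∉ t) (u : SmV) (hs : OS s u = 0)
    (ht : OS t u = 0) : u = 0 := by
  have hc : IsCoprime (PS s) (PS t) := by
    rw [Polynomial.isCoprime_iff_aeval_ne_zero_of_isAlgClosed ℂ ℂ]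
    intro a
    simp only [Polynomial.coe_aeval_eq_eval, ne_eq, PS_eval_eq_zero]
    by_cases ha : a ∈ s
    · exact Or.inr (h a ha)
    · exact Or.inl ha
  have := Polynomial.disjoint_ker_aeval_of_isCoprime DD hc
  exact (Submodule.disjoint_def.1 this) u hs ht

/-- decay of solutions -/
theorem decay (s : Multiset ℂ) (hs : ∀ a ∈ s, 0 < a.im) (u : SmV) (h : OS s u = 0) :
    ∃ C c : ℝ, 0 < c ∧ ∀ x : ℝ, 0 ≤ x → ‖(u : ℝ → ℂ) x‖ ≤ C * Real.exp (-c * x) := by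
  induction s using Multiset.induction_on generalizing u with
  | empty =>
    rw [OS_zero] at h
    subst h
    exact ⟨0, 1, one_pos, by simp⟩
  | cons a s ih =>
    rw [OS_cons] at h
    obtain ⟨C, c, hc, hf⟩ := ih (fun b hb => hs b (Multiset.mem_cons_of_mem hb)) _ h
    have ha := hs a (Multiset.mem_cons_self a s)
    have hC : 0 ≤ C := by
      have := (norm_nonneg _).trans (hf 0 le_rfl)
      simpa using this
    set d := min c (a.im / 2) with hd
    have hdc : d ≤ c := min_le_left _ _
    have hda : d < a.im := (min_le_right _ _).trans_lt (by linarith)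
    have hd0 : 0 < d := lt_min hc (by linarith)
    set e := a.im - d with he
    have he0 : 0 < e := by linarith
    have hexp : ∀ x : ℝ, ‖Complex.exp (-(Complex.I * a) * x)‖ = Real.exp (a.im * x) := by
      intro x
      rw [Complex.norm_exp]
      simp
    refine ⟨‖(u : ℝ → ℂ) 0‖ + C / e, d, hd0, fun x hx => ?_⟩
    have key := image_norm_le_of_norm_deriv_right_le_deriv_boundary (a := 0) (b := x)
      (f := fun x : ℝ => Complex.exp (-(Complex.I * a) * x) * (u : ℝ → ℂ) x)
      (f' := fun x : ℝ => Complex.exp (-(Complex.I * a) * x) *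
        (Complex.I * ((DD u - a • u : SmV) : ℝ → ℂ) x))
      (fun y _ => (conj_hasDerivAt a u y).continuousAt.continuousWithinAt)
      (fun y _ => (conj_hasDerivAt a u y).hasDerivWithinAt)
      (B := fun y => ‖(u : ℝ → ℂ) 0‖ + C / e * Real.exp (e * y))
      (B' := fun y => C * Real.exp (e * y))
      (by
        simp
        positivity)
      (by
        intro y
        have h1 : HasDerivAt (fun y : ℝ => Real.exp (e * y)) (Real.exp (e * y) * (e * 1)) y :=
          ((hasDerivAt_id y).const_mul e).exp
        have h2 := (h1.const_mul (C / e)).const_add (‖(u : ℝ → ℂ) 0‖)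
        refine h2.congr_deriv ?_
        field_simp)
      (by
        intro y hy
        rw [norm_mul, norm_mul, hexp, Complex.norm_I, one_mul]
        calc Real.exp (a.im * y) * ‖((DD u - a • u : SmV) : ℝ → ℂ) y‖
            ≤ Real.exp (a.im * y) * (C * Real.exp (-c * y)) := by
              gcongr
              exact hf y hy.1
          _ = C * Real.exp (a.im * y + -c * y) := by rw [Real.exp_add]; ring
          _ ≤ C * Real.exp (e * y) := by
              gcongr
              have := hy.1
              nlinarith)
      (x := x) ⟨hx, le_rfl⟩
    simp only [norm_mul, hexp] at key
    have h3 : ‖(u : ℝ → ℂ) x‖ = Real.exp (-a.im * x) *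
        (Real.exp (a.im * x) * ‖(u : ℝ → ℂ) x‖) := by
      rw [← mul_assoc, ← Real.exp_add]
      simp
    rw [h3]
    calc _ ≤ Real.exp (-a.im * x) * (‖(u : ℝ → ℂ) 0‖ + C / e * Real.exp (e * x)) := by gcongr
      _ ≤ Real.exp (-a.im * x) * (‖(u : ℝ → ℂ) 0‖ * Real.exp (e * x)
            + C / e * Real.exp (e * x)) := by
          gcongr
          have : 1 ≤ Real.exp (e * x) := Real.one_le_exp (by positivity)
          nlinarith [norm_nonneg ((u : ℝ → ℂ) 0)]
      _ = (‖(u : ℝ → ℂ) 0‖ + C / e) * Real.exp (-a.im * x + e * x) := by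
          rw [Real.exp_add]; ring
      _ = _ := by
          congr 2
          rw [he]; ring

theorem decay_tendsto (s : Multiset ℂ) (hs : ∀ a ∈ s, 0 < a.im) (u : SmV) (h : OS s u = 0) :
    Tendsto (u : ℝ → ℂ) atTop (nhds 0) := by
  obtain ⟨C, c, hc, hb⟩ := decay s hs u h
  refine squeeze_zero_norm' (a := fun x => C * Real.exp (-c * x)) ?_ ?_
  · filter_upwards [eventually_ge_atTop 0] with x hx using hb x hx
  · have h1 : Tendsto (fun x : ℝ => -c * x) atTop atBot :=
      tendsto_id.const_mul_atTop_of_neg (by linarith)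
    simpa using (Real.tendsto_exp_atBot.comp h1).const_mul C

theorem sep_points {V ι : Type*} [AddCommGroup V] [Module ℂ V] [FiniteDimensional ℂ V]
    (f : ι → V →ₗ[ℂ] ℂ) (h : ∀ z : V, z ≠ 0 → ∃ i, f i z ≠ 0) (g : V →ₗ[ℂ] ℂ) :
    ∃ c : ι →₀ ℂ, ∀ v, g v = ∑ i ∈ c.support, c i * f i v := by
  have hspan : Submodule.span ℂ (Set.range f) = ⊤ := by
    apply Submodule.span_eq_top_of_ne_zero
    intro z hz
    obtain ⟨i, hi⟩ := h z hz
    exact ⟨f i, ⟨i, rfl⟩, hi⟩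
  have hmem : g ∈ Submodule.span ℂ (Set.range f) := by
    rw [hspan]; trivial
  obtain ⟨c, hc⟩ := (Finsupp.mem_span_range_iff_exists_finsupp).1 hmem
  refine ⟨c, fun v => ?_⟩
  rw [← hc]
  simp [Finsupp.sum, LinearMap.sum_apply]

/-- Derivatives of decaying solutions decay. -/
theorem DD_tendsto (s : Multiset ℂ) (u : SmV) (h : OS s u = 0)
    (hu : Tendsto (u : ℝ → ℂ) atTop (nhds 0)) : Tendsto (DD u : ℝ → ℂ) atTop (nhds 0) := by
  obtain ⟨c, hc⟩ := sep_points (V := KS s) (fun x : ℝ => (ev x ∘ₗ (KS s).subtype : KS s →ₗ[ℂ] ℂ))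
    (by
      intro z hz
      by_contra! hcon
      apply hz
      exact Subtype.ext (Subtype.ext (funext hcon)))
    ((ev 0 ∘ₗ DD) ∘ₗ (KS s).subtype : KS s →ₗ[ℂ] ℂ)
  have hform : ∀ x : ℝ, (DD u : ℝ → ℂ) x = ∑ y ∈ c.support, c y * (u : ℝ → ℂ) (x + y) := by
    intro x
    have hT : Tr x u ∈ KS s := by
      rw [mem_KS, OS_Tr, h]; rfl
    have := hc ⟨Tr x u, hT⟩
    simp only [LinearMap.comp_apply,
      Submodule.subtype_apply, ev_apply, DD_Tr, Tr_apply, zero_add] at this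
    rw [this]
    exact Finset.sum_congr rfl fun y _ => by rw [add_comm]
  rw [funext hform]
  have : Tendsto (fun x : ℝ => ∑ y ∈ c.support, c y * (u : ℝ → ℂ) (x + y)) atTop
      (nhds (∑ y ∈ c.support, c y * 0)) :=
    tendsto_finsetSum _ fun y _ =>
      (hu.comp (tendsto_atTop_add_const_right _ y tendsto_id)).const_mul (c y)
  simpa using this

theorem OS_tendsto (s t : Multiset ℂ) (u : SmV) (h : OS s u = 0)
    (hu : Tendsto (u : ℝ → ℂ) atTop (nhds 0)) : Tendsto (OS t u : ℝ → ℂ) atTop (nhds 0) := by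
  induction t using Multiset.induction_on generalizing u with
  | empty => simpa [OS_zero] using hu
  | cons a t ih =>
    rw [OS_cons]
    apply ih
    · rw [map_sub, map_smul, OS_DD, h]; simp
    · have := (DD_tendsto s u h hu).sub (hu.const_mul a)
      rw [mul_zero, sub_zero] at this
      exact this

/-- A decaying solution all of whose characteristic roots are in the lower half plane vanishes. -/
theorem lower_zero (s : Multiset ℂ) (hs : ∀ a ∈ s, a.im < 0) (u : SmV) (h : OS s u = 0)
    (hu : Tendsto (u : ℝ → ℂ) atTop (nhds 0)) : u = 0 := by
  induction s using Multiset.induction_on generalizing u with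
  | empty => simpa [OS_zero] using h
  | cons a s ih =>
    have h' := h
    rw [OS_cons] at h'
    have h1 : DD u - a • u = 0 := by
      apply ih (fun b hb => hs b (Multiset.mem_cons_of_mem hb)) _ h'
      have := (DD_tendsto _ u h hu).sub (hu.const_mul a)
      rw [mul_zero, sub_zero] at this
      exact this
    have ha := hs a (Multiset.mem_cons_self a s)
    have h2 := first_order a u Set.univ convex_univ trivial (by simp [h1])
    have h0 : (u : ℝ → ℂ) 0 = 0 := by
      have h3 : ∀ᶠ x : ℝ in atTop, ‖(u : ℝ → ℂ) 0‖ ≤ ‖(u : ℝ → ℂ) x‖ := by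
        filter_upwards [eventually_ge_atTop 0] with x hx
        rw [h2 x trivial, norm_mul, Complex.norm_exp]
        have : 1 ≤ Real.exp (Complex.I * a * x).re := Real.one_le_exp (by simp; nlinarith)
        nlinarith [norm_nonneg ((u : ℝ → ℂ) 0)]
      have h4 := ge_of_tendsto hu.norm h3
      simpa using h4
    ext x
    rw [h2 x trivial, h0]
    simp

theorem upper_of_decay (s t : Multiset ℂ) (ht : ∀ a ∈ t, a.im < 0) (u : SmV)
    (h : OS (s + t) u = 0) (hu : Tendsto (u : ℝ → ℂ) atTop (nhds 0)) : OS s u = 0 := by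
  apply lower_zero t ht
  · rw [OS_comm, ← OS_add, h]
  · exact OS_tendsto _ _ u h hu

theorem aeval_natDegree_le {σ : Type*} (A : MvPolynomial σ ℂ) (N : ℕ) (hA : A.IsHomogeneous N)
    (f : σ → Polynomial ℂ) (hf : ∀ i, (f i).natDegree ≤ 1) :
    (MvPolynomial.aeval f A).natDegree ≤ N := by
  rw [MvPolynomial.aeval_def, MvPolynomial.eval₂_eq]
  apply Polynomial.natDegree_sum_le_of_forall_le
  intro d hd
  have hdN : d.degree = N := by
    rw [← hA (MvPolynomial.mem_support_iff.1 hd), Finsupp.degree_eq_weight_one]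
    rfl
  rw [Polynomial.algebraMap_eq]
  refine (Polynomial.natDegree_C_mul_le _ _).trans ?_
  refine (Polynomial.natDegree_prod_le _ _).trans ?_
  rw [← hdN, Finsupp.degree_apply]
  refine Finset.sum_le_sum fun i _ => ?_
  refine Polynomial.natDegree_pow_le.trans ?_
  calc d i * (f i).natDegree ≤ d i * 1 := Nat.mul_le_mul_left _ (hf i)
    _ = d i := mul_one _

theorem split_poly (P : Polynomial ℂ) (m : ℕ) (hm : 1 ≤ m) (hdeg : P.natDegree ≤ 2 * m)
    (hp : (P.roots.filter fun z => 0 < z.im).card = m)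
    (hq : (P.roots.filter fun z => z.im < 0).card = m) :
    ∃ (s t : Multiset ℂ) (c : ℂ), s.card = m ∧ t.card = m ∧ (∀ a ∈ s, 0 < a.im) ∧
      (∀ a ∈ t, a.im < 0) ∧ c ≠ 0 ∧ P = Polynomial.C c * PS (s + t) := by
  refine ⟨P.roots.filter fun z => 0 < z.im, P.roots.filter fun z => z.im < 0, P.leadingCoeff,
    hp, hq, fun a ha => (Multiset.mem_filter.1 ha).2, fun a ha => (Multiset.mem_filter.1 ha).2,
    ?_, ?_⟩
  · rw [Polynomial.leadingCoeff_ne_zero]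
    rintro rfl
    simp at hp
    omega
  · have hle : (P.roots.filter fun z => 0 < z.im) + (P.roots.filter fun z => z.im < 0) ≤
        P.roots := by
      rw [Multiset.filter_add_filter]
      have : (P.roots.filter fun z => 0 < z.im ∧ z.im < 0) = 0 := by
        rw [Multiset.filter_eq_nil]
        rintro a _ ⟨h1, h2⟩
        linarith
      rw [this, add_zero]
      exact Multiset.filter_le _ _
    have heq := Multiset.eq_of_le_of_card_le hle (by
      rw [Multiset.card_add, hp, hq]
      have := P.card_roots'
      omega)
    rw [heq]
    exact (IsAlgClosed.splits P).eq_prod_roots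

theorem polyOp_split (s t : Multiset ℂ) (c : ℂ) (u : SmV) (x : ℝ) :
    polyOp (Polynomial.C c * PS (s + t)) u x = c * (OS (s + t) u : ℝ → ℂ) x := by
  rw [polyOp_eq, map_mul, Module.End.mul_apply, Polynomial.aeval_C]
  rfl

theorem extend_sol (s t : Multiset ℂ) (ht : ∀ a ∈ t, a.im < 0) (c : ℂ) (hc : c ≠ 0)
    (w : ℝ → ℂ) (hw : ContDiff ℝ (⊤ : ℕ∞) w)
    (hode : ∀ x : ℝ, 0 < x → polyOp (Polynomial.C c * PS (s + t)) w x = 0)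
    (hdec : Tendsto w atTop (nhds 0)) :
    ∃ u : SmV, OS s u = 0 ∧ EqOn w (u : ℝ → ℂ) (Ici 0) ∧
      ∀ j < (s + t).card,
        ((DD ^ j) u : ℝ → ℂ) 0 = (-Complex.I) ^ j * iteratedDeriv j w 0 := by
  let W : SmV := ⟨w, hw⟩
  obtain ⟨u, hu, hd⟩ := ode_exists (s + t) fun j => ((DD ^ j) W : ℝ → ℂ) 0
  have hW : ∀ x ∈ Ici (0 : ℝ), (OS (s + t) W : ℝ → ℂ) x = 0 := by
    have h1 : ∀ x ∈ Ioi (0 : ℝ), (OS (s + t) W : ℝ → ℂ) x = 0 := by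
      intro x hx
      have h2 := hode x hx
      have h3 := polyOp_split s t c W x
      rw [show ((W : SmV) : ℝ → ℂ) = w from rfl, h2] at h3
      exact (mul_eq_zero.1 h3.symm).resolve_left hc
    have h2 : EqOn (OS (s + t) W : ℝ → ℂ) (fun _ => 0) (closure (Ioi (0 : ℝ))) :=
      Set.EqOn.closure h1 (SmV.cont _) continuous_const
    rwa [closure_Ioi] at h2
  have hE : EqOn w (u : ℝ → ℂ) (Ici 0) := by
    intro x hx
    have := ode_unique (s + t) (W - u) (Ici 0) (convex_Ici 0) self_mem_Ici
      (by
        intro y hy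
        rw [map_sub, hu, sub_zero]
        exact hW y hy)
      (by
        intro j hj
        rw [map_sub]
        exact sub_eq_zero.2 (hd j hj).symm) x hx
    exact sub_eq_zero.1 this
  refine ⟨u, ?_, hE, ?_⟩
  · apply upper_of_decay s t ht u hu
    refine hdec.congr' ?_
    filter_upwards [eventually_ge_atTop 0] with x hx using hE hx
  · intro j hj
    rw [hd j hj, DD_pow_apply]

/-- The transmission map. -/
def Phi (N : ℕ) (s₁ s₂ : Multiset ℂ) : (KS s₁ × KS s₂) →ₗ[ℂ] (Fin N → ℂ) :=
  LinearMap.pi fun j =>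
    (ev 0 ∘ₗ (DD ^ (j : ℕ))) ∘ₗ (KS s₁).subtype ∘ₗ LinearMap.fst ℂ _ _
    + (-1 : ℂ) ^ ((j : ℕ) + 1) •
      ((ev 0 ∘ₗ (DD ^ (j : ℕ))) ∘ₗ (KS s₂).subtype ∘ₗ LinearMap.snd ℂ _ _)

theorem Phi_apply (N : ℕ) (s₁ s₂ : Multiset ℂ) (p : KS s₁ × KS s₂) (j : Fin N) :
    Phi N s₁ s₂ p j = ((DD ^ (j : ℕ)) (p.1 : SmV) : ℝ → ℂ) 0 +
      (-1 : ℂ) ^ ((j : ℕ) + 1) * ((DD ^ (j : ℕ)) (p.2 : SmV) : ℝ → ℂ) 0 := rfl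

theorem Phi_inj (N : ℕ) (s₁ s₂ : Multiset ℂ) (hN : s₁.card + s₂.card = N)
    (h₁ : ∀ a ∈ s₁, 0 < a.im) (h₂ : ∀ a ∈ s₂, 0 < a.im) :
    Function.Injective (Phi N s₁ s₂) := by
  rw [injective_iff_map_eq_zero]
  rintro ⟨⟨u, hu⟩, ⟨v, hv⟩⟩ h
  rw [mem_KS] at hu hv
  have hv' := OS_Rf s₂ v hv
  have huv : u - Rf v = 0 := by
    apply unique_univ (s₁ + s₂.map fun a => -a)
    · rw [map_sub, OS_add s₁ _ (Rf v), hv', add_comm, OS_add, hu, map_zero, map_zero, sub_zero]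
    · intro j hj
      have hjN : j < N := by simpa [hN] using hj
      have := congrFun h ⟨j, hjN⟩
      rw [Phi_apply] at this
      rw [map_sub, DD_pow_Rf]
      have e : (((DD ^ j) u - (-1 : ℂ) ^ j • Rf ((DD ^ j) v) : SmV) : ℝ → ℂ) 0 =
        ((DD ^ j) u : ℝ → ℂ) 0 - (-1 : ℂ) ^ j * ((DD ^ j) v : ℝ → ℂ) (-0) := rfl
      rw [e, neg_zero, ← (show _ = (0 : ℂ) from this)]
      ring
  have huv' : u = Rf v := sub_eq_zero.1 huv
  have hu0 : u = 0 := by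
    apply KS_disjoint s₁ (s₂.map fun a => -a) _ u hu (by rw [huv', hv'])
    intro a ha ha'
    obtain ⟨b, hb, rfl⟩ := Multiset.mem_map.1 ha'
    have h3 := h₁ _ ha
    have h4 := h₂ _ hb
    rw [Complex.neg_im] at h3
    linarith
  have hv0 : v = 0 := by
    ext x
    have : (u : ℝ → ℂ) (-x) = (Rf v : ℝ → ℂ) (-x) := by rw [huv']
    rw [Rf_apply, neg_neg, hu0] at this
    exact this.symm
  subst hu0 hv0
  rfl

theorem surj_of_inj {V W X : Type*} [AddCommGroup V] [Module ℂ V] [FiniteDimensional ℂ V]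
    [AddCommGroup W] [Module ℂ W] [FiniteDimensional ℂ W]
    [AddCommGroup X] [Module ℂ X] [FiniteDimensional ℂ X] (f : (V × W) →ₗ[ℂ] X)
    (h : Module.finrank ℂ V + Module.finrank ℂ W = Module.finrank ℂ X)
    (hf : Function.Injective f) : Function.Surjective f :=
  (LinearMap.injective_iff_surjective_of_finrank_eq_finrank
    (by rw [Module.finrank_prod, h])).1 hf

theorem Phi_surj (N : ℕ) (s₁ s₂ : Multiset ℂ) (hN : s₁.card + s₂.card = N)
    (h₁ : ∀ a ∈ s₁, 0 < a.im) (h₂ : ∀ a ∈ s₂, 0 < a.im) :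
    Function.Surjective (Phi N s₁ s₂) := by
  have hr : Module.finrank ℂ (KS s₁) + Module.finrank ℂ (KS s₂) =
      Module.finrank ℂ (Fin N → ℂ) := by
    rw [KS_finrank, KS_finrank, hN]
    simp
  exact surj_of_inj (V := KS s₁) (W := KS s₂) (X := Fin N → ℂ) (Phi N s₁ s₂) hr
    (Phi_inj N s₁ s₂ hN h₁ h₂)

/-- For a properly elliptic symbol `A₁` and a properly parameter-elliptic
symbol `A₂`, and for every fixed `ξ' ≠ 0` and `q ∈ Σ̄`, the ODE system of the transmission
model problem has exactly one fundamental solution `ω` (uniqueness on `[0,∞)`). -/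
theorem fundamental_solution_exists_unique
    (n m : ℕ) (hn : 2 ≤ n) (hm : 1 ≤ m) (θ : ℝ) (hθ : θ ∈ Set.Ico 0 Real.pi)
    (A₁ : MvPolynomial (Fin n) ℂ) (A₂ : MvPolynomial (Fin (n + 1)) ℂ)
    (hA₁hom : A₁.IsHomogeneous (2 * m)) (hA₂hom : A₂.IsHomogeneous (2 * m))
    (hA₁ell : ∀ ξ : EuclideanSpace ℝ (Fin n), ξ ≠ 0 →
      MvPolynomial.eval (fun i => (ξ i : ℂ)) A₁ ≠ 0)
    (hA₁prop : ∀ ξ : EuclideanSpace ℝ (Fin (n - 1)), ξ ≠ 0 →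
      ((polA1 n A₁ ξ).roots.filter fun z => 0 < z.im).card = m ∧
      ((polA1 n A₁ ξ).roots.filter fun z => z.im < 0).card = m)
    (hA₂ell : ∀ (ξ : EuclideanSpace ℝ (Fin n)) (q : ℂ), q ∈ sector m θ → ¬(ξ = 0 ∧ q = 0) →
      MvPolynomial.eval (fun i : Fin (n + 1) =>
        if h : (i : ℕ) < n then (ξ ⟨i, h⟩ : ℂ) else q) A₂ ≠ 0)
    (hA₂prop : ∀ (ξ : EuclideanSpace ℝ (Fin (n - 1))) (q : ℂ), q ∈ sector m θ →
      ¬(ξ = 0 ∧ q = 0) →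
      ((polA2 n A₂ ξ q).roots.filter fun z => 0 < z.im).card = m ∧
      ((polA2 n A₂ ξ q).roots.filter fun z => z.im < 0).card = m)
    (ξ : EuclideanSpace ℝ (Fin (n - 1))) (hξ : ξ ≠ 0) (q : ℂ) (hq : q ∈ sector m θ) :
    (∃ ω : Fin 2 → Fin (2 * m) → ℝ → ℂ, FundSol n m A₁ A₂ ξ q ω) ∧
    (∀ ω ω' : Fin 2 → Fin (2 * m) → ℝ → ℂ, FundSol n m A₁ A₂ ξ q ω →
      FundSol n m A₁ A₂ ξ q ω' → ∀ i k, EqOn (ω i k) (ω' i k) (Ici 0)) := by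
  have hd1 : (polA1 n A₁ ξ).natDegree ≤ 2 * m := by
    apply aeval_natDegree_le _ _ hA₁hom
    intro i
    split_ifs <;> simp
  have hd2 : (polA2 n A₂ ξ q).natDegree ≤ 2 * m := by
    apply aeval_natDegree_le _ _ hA₂hom
    intro i
    split_ifs <;> simp
  obtain ⟨s₁, t₁, c₁, hs₁, ht₁, hu₁, hl₁, hc₁, hP₁⟩ := split_poly _ m hm hd1
    (hA₁prop ξ hξ).1 (hA₁prop ξ hξ).2
  obtain ⟨s₂, t₂, c₂, hs₂, ht₂, hu₂, hl₂, hc₂, hP₂⟩ := split_poly _ m hm hd2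
    (hA₂prop ξ q hq fun h => hξ h.1).1 (hA₂prop ξ q hq fun h => hξ h.1).2
  have hN : s₁.card + s₂.card = 2 * m := by omega
  have hext : ∀ ω : Fin 2 → Fin (2 * m) → ℝ → ℂ, FundSol n m A₁ A₂ ξ q ω → ∀ k,
      ∃ p : KS s₁ × KS s₂, EqOn (ω 0 k) ((p.1 : SmV) : ℝ → ℂ) (Ici 0) ∧
        EqOn (ω 1 k) ((p.2 : SmV) : ℝ → ℂ) (Ici 0) ∧
        Phi (2 * m) s₁ s₂ p = fun j => if j = k then 1 else 0 := by
    rintro ω ⟨hsm, ho1, ho2, htr, hdec⟩ k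
    obtain ⟨u, hu, hue, hud⟩ := extend_sol s₁ t₁ hl₁ c₁ hc₁ (ω 0 k) (hsm 0 k)
      (by rw [← hP₁]; exact ho1 k) (hdec 0 k)
    obtain ⟨v, hv, hve, hvd⟩ := extend_sol s₂ t₂ hl₂ c₂ hc₂ (ω 1 k) (hsm 1 k)
      (by rw [← hP₂]; exact ho2 k) (hdec 1 k)
    refine ⟨⟨⟨u, hu⟩, ⟨v, hv⟩⟩, hue, hve, ?_⟩
    funext j
    have hj := j.2
    rw [Phi_apply, ← htr j k]
    rw [hud j (by rw [Multiset.card_add]; omega), hvd j (by rw [Multiset.card_add]; omega)]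
  constructor
  · choose p hp using fun k : Fin (2 * m) => Phi_surj (2 * m) s₁ s₂ hN hu₁ hu₂
      (fun j => if j = k then 1 else 0)
    refine ⟨fun i k => if i = 0 then (((p k).1 : SmV) : ℝ → ℂ) else (((p k).2 : SmV) : ℝ → ℂ),
      ?_, ?_, ?_, ?_, ?_⟩
    · intro i k
      dsimp only
      split_ifs
      · exact SmV.smooth _
      · exact SmV.smooth _
    · intro k x _
      have h0 : OS s₁ (p k).1 = 0 := (p k).1.2
      simp only [if_true]
      rw [hP₁, polyOp_split, add_comm, OS_add, h0]
      simp
    · intro k x _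
      have h0 : OS s₂ (p k).2 = 0 := (p k).2.2
      simp only [one_ne_zero, if_false]
      rw [hP₂, polyOp_split, add_comm, OS_add, h0]
      simp
    · intro j k
      have := congrFun (hp k) j
      rw [Phi_apply, DD_pow_apply, DD_pow_apply] at this
      simpa using this
    · intro i k
      dsimp only
      split_ifs
      · exact decay_tendsto s₁ hu₁ _ (p k).1.2
      · exact decay_tendsto s₂ hu₂ _ (p k).2.2
  · intro ω ω' h h' i k
    obtain ⟨p, hp1, hp2, hp⟩ := hext ω h k
    obtain ⟨p', hp1', hp2', hp'⟩ := hext ω' h' k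
    have hpp : p = p' := Phi_inj (2 * m) s₁ s₂ hN hu₁ hu₂ (hp.trans hp'.symm)
    subst hpp
    fin_cases i
    · exact hp1.trans hp1'.symm
    · exact hp2.trans hp2'.symm
end
end
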